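/- arXiv:1201.1022 — 6 statements merged into one kernel-verified Lean document; each statement's English description precedes it below -/
import Mathlib

section
/- Let v : ℝ³ ∖ {0} → ℝ be a smooth function that is positively homogeneous of order 1. Let y ∈ S² be a point at which the Hessian quadratic form D²v(y) changes sign (is indefinite), let a ∈ S² be linearly independent from y, and let G ⊆ ℝ³ ∖ {0} be an open set containing y. Then sup_{x ∈ G} ∂_a v(x) > ∂_a v(y), i.e. the directional derivative v_a does not attain its supremum over G at y. -/
/-!
Differentiating `v (t • x) = t * v x` shows that `Dv` is homogeneous of degree `0`, so Euler's
identity for `Dv` puts `y` in the kernel of `D²v(y)`. If `∂ₐv` had a local extremum at `y`, its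
gradient `D²v(y) a` would vanish and `a` would be in the kernel as well. In dimension three a
symmetric form whose kernel contains two independent vectors has rank at most one, that is,
`D²v(y)` is a multiple of `ℓ²` for a linear form `ℓ`, so it cannot change sign.
-/

open Module Topology

section Homogeneous

variable {E F : Type*} [NormedAddCommGroup E] [NormedSpace ℝ E]
  [NormedAddCommGroup F] [NormedSpace ℝ F] {f : E → F} {k : ℝ} {x : E}

/-- Positive homogeneity of order `k` on the punctured space; the value at the origin is left
unconstrained because a function on `E ∖ {0}` is encoded as a total function on `E`. -/
def IsPosHomogeneous (k : ℝ) (f : E → F) : Prop :=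
  ∀ t : ℝ, 0 < t → ∀ x : E, x ≠ 0 → f (t • x) = t ^ k • f x

namespace IsPosHomogeneous

protected theorem fderiv (hf : IsPosHomogeneous k f) : IsPosHomogeneous (k - 1) (fderiv ℝ f) := by
  intro t ht x hx
  have h_scale : (fun z ↦ f (t • z)) =ᶠ[𝓝 x] t ^ k • f := by
    filter_upwards [isOpen_ne.mem_nhds hx] with z hz using hf t ht z hz
  have h_deriv : t • fderiv ℝ f (t • x) = t ^ k • fderiv ℝ f x := by
    rw [← fderiv_comp_smul, h_scale.fderiv_eq, fderiv_const_smul_field, Pi.smul_apply]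
  rw [Real.rpow_sub_one ht.ne', div_eq_inv_mul, mul_smul, ← h_deriv, inv_smul_smul₀ ht.ne']

theorem fderiv_apply_self (hf : IsPosHomogeneous k f) (hx : x ≠ 0)
    (hfx : DifferentiableAt ℝ f x) : fderiv ℝ f x x = k • f x := by
  have h_ray : HasDerivAt (fun t : ℝ ↦ t • x) x 1 := by
    simpa only [id_eq, one_smul] using (hasDerivAt_id (1 : ℝ)).smul_const x
  have h_chain : HasDerivAt (fun t : ℝ ↦ f (t • x)) (fderiv ℝ f x x) 1 :=
    HasFDerivAt.comp_hasDerivAt 1 (by simpa only [one_smul] using hfx.hasFDerivAt) h_ray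
  have h_power : HasDerivAt (fun t : ℝ ↦ t ^ k • f x) (k • f x) 1 := by
    simpa only [Real.one_rpow, mul_one] using
      (Real.hasDerivAt_rpow_const (p := k) (Or.inl one_ne_zero)).smul_const (f x)
  refine (h_chain.congr_of_eventuallyEq ?_).unique h_power
  filter_upwards [lt_mem_nhds zero_lt_one] with t ht using (hf t ht x hx).symm

end IsPosHomogeneous

end Homogeneous

theorem fderiv_fderiv_apply_eq_zero_of_isLocalExtr {E : Type*} [NormedAddCommGroup E]
    [NormedSpace ℝ E] {f : E → ℝ} {x a : E} (hf : DifferentiableAt ℝ (fderiv ℝ f) x)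
    (h_extr : IsLocalExtr (fun z ↦ fderiv ℝ f z a) x) (b : E) :
    fderiv ℝ (fderiv ℝ f) x b a = 0 := by
  have h_deriv : fderiv ℝ (fun z ↦ fderiv ℝ f z a) x b = fderiv ℝ (fderiv ℝ f) x b a := by
    simp [fderiv_clm_apply hf (differentiableAt_const a)]
  rw [← h_deriv, h_extr.fderiv_eq_zero, zero_apply]

section RankNullity

variable {K V W ι : Type*} [DivisionRing K] [AddCommGroup V] [Module K V] [FiniteDimensional K V]
  [AddCommGroup W] [Module K W] [Fintype ι] {f : V →ₗ[K] W} {b : ι → V}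

theorem finrank_range_add_card_le_finrank (hb : LinearIndependent K b) (hfb : ∀ i, f (b i) = 0) :
    finrank K f.range + Fintype.card ι ≤ finrank K V := by
  have hb_ker : LinearIndependent K (fun i ↦ (⟨b i, hfb i⟩ : f.ker)) :=
    LinearIndependent.of_comp f.ker.subtype hb
  rw [← f.finrank_range_add_finrank_ker]
  gcongr
  exact hb_ker.fintype_card_le_finrank

theorem isPrincipal_range_of_finrank_le_card_add_one (hb : LinearIndependent K b)
    (hfb : ∀ i, f (b i) = 0) (h_card : finrank K V ≤ Fintype.card ι + 1) :
    f.range.IsPrincipal := by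
  rw [← Submodule.finrank_le_one_iff_isPrincipal]
  have := finrank_range_add_card_le_finrank hb hfb
  lia

end RankNullity

theorem apply_mul_apply_comm_of_isPrincipal_range {R M N : Type*} [CommSemiring R]
    [AddCommMonoid M] [Module R M] [AddCommMonoid N] [Module R N] {B : M →ₗ[R] N →ₗ[R] R}
    (hB : B.range.IsPrincipal) (p q : M) (r s : N) : B p r * B q s = B p s * B q r := by
  obtain ⟨ℓ, hℓ⟩ := hB
  have h_multiple (m : M) : ∃ c : R, c • ℓ = B m :=
    Submodule.mem_span_singleton.mp (hℓ ▸ B.mem_range_self m)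
  obtain ⟨c, hc⟩ := h_multiple p
  obtain ⟨d, hd⟩ := h_multiple q
  simp only [← hc, ← hd, LinearMap.smul_apply, smul_eq_mul]
  ring

theorem apply_self_mul_apply_self_nonneg_of_isPrincipal_range {R M : Type*} [CommRing R]
    [LinearOrder R] [IsStrictOrderedRing R] [AddCommMonoid M] [Module R M]
    {B : M →ₗ[R] M →ₗ[R] R} (h_symm : ∀ p q, B p q = B q p) (hB : B.range.IsPrincipal)
    (p q : M) : 0 ≤ B p p * B q q :=
  calc 0 ≤ B p q * B p q := mul_self_nonneg _
    _ = B p q * B q p := by rw [h_symm q p]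
    _ = B p p * B q q := apply_mul_apply_comm_of_isPrincipal_range hB p q q p

theorem directional_derivative_no_sup_at_indefinite_point_general {E : Type*}
    [NormedAddCommGroup E] [NormedSpace ℝ E] (hE : finrank ℝ E = 3) {v : E → ℝ} {y a : E}
    (hv : ContDiffAt ℝ 2 v y) (h_hom : IsPosHomogeneous 1 v)
    (h_ind : LinearIndependent ℝ ![y, a])
    (h_pos : ∃ p : E, 0 < iteratedFDeriv ℝ 2 v y ![p, p])
    (h_neg : ∃ q : E, iteratedFDeriv ℝ 2 v y ![q, q] < 0) :
    ¬ IsLocalExtr (fun x ↦ fderiv ℝ v x a) y := by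
  intro h_extr
  obtain ⟨p, hp⟩ := h_pos
  obtain ⟨q, hq⟩ := h_neg
  rw [iteratedFDeriv_two_apply] at hp hq
  have : FiniteDimensional ℝ E := .of_finrank_pos (by lia)
  have h_diff : DifferentiableAt ℝ (fderiv ℝ v) y :=
    (hv.fderiv_right (m := 1) (by norm_num)).differentiableAt one_ne_zero
  have h_symm : IsSymmSndFDerivAt ℝ v y := hv.isSymmSndFDerivAt (by simp)
  set B := (fderiv ℝ (fderiv ℝ v) y).toLinearMap₁₂
  have hBy : B y = 0 := by
    ext b
    have h_euler := h_hom.fderiv.fderiv_apply_self (h_ind.ne_zero 0) h_diff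
    rw [sub_self, zero_smul] at h_euler
    exact DFunLike.congr_fun h_euler b
  have hBa : B a = 0 := by
    ext b
    exact (h_symm a b).trans (fderiv_fderiv_apply_eq_zero_of_isLocalExtr h_diff h_extr b)
  have h_rank : B.range.IsPrincipal := isPrincipal_range_of_finrank_le_card_add_one h_ind
    (Fin.forall_fin_two.mpr ⟨hBy, hBa⟩) (by simp [hE])
  exact (apply_self_mul_apply_self_nonneg_of_isPrincipal_range (B := B) h_symm h_rank p q).not_gt
    (mul_neg_of_pos_of_neg hp hq)

/-- Lemma 0: for a smooth positively 1-homogeneous function `v` on `ℝ³ ∖ {0}`,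
if the Hessian quadratic form of `v` at a unit vector `y` is indefinite, `a` is a unit
vector linearly independent from `y`, and `G` is an open neighbourhood of `y` inside
`ℝ³ ∖ {0}`, then the directional derivative `∂ₐv` does not attain its supremum over `G`
at `y`: some point of `G` has a strictly larger value. -/
theorem directional_derivative_no_sup_at_indefinite_point
    (v : EuclideanSpace ℝ (Fin 3) → ℝ)
    (h_sm : ContDiffOn ℝ (⊤ : ℕ∞) v {x | x ≠ 0})
    (h_hom : ∀ t : ℝ, 0 < t → ∀ x : EuclideanSpace ℝ (Fin 3), x ≠ 0 →
      v (t • x) = t * v x)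
    (y a : EuclideanSpace ℝ (Fin 3)) (hy : ‖y‖ = 1) (ha : ‖a‖ = 1)
    (h_ind : LinearIndependent ℝ ![y, a])
    (h_pos : ∃ p : EuclideanSpace ℝ (Fin 3), 0 < iteratedFDeriv ℝ 2 v y ![p, p])
    (h_neg : ∃ q : EuclideanSpace ℝ (Fin 3), iteratedFDeriv ℝ 2 v y ![q, q] < 0)
    (G : Set (EuclideanSpace ℝ (Fin 3))) (hG_open : IsOpen G) (hyG : y ∈ G)
    (hG_sub : G ⊆ {x | x ≠ 0}) :
    ∃ x ∈ G, fderiv ℝ v y a < fderiv ℝ v x a := by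
  by_contra! h_max
  exact directional_derivative_no_sup_at_indefinite_point_general finrank_euclideanSpace_fin
    ((h_sm.contDiffAt (isOpen_ne.mem_nhds (hG_sub hyG))).of_le ENat.LEInfty.out)
    (by simpa [IsPosHomogeneous] using h_hom) h_ind h_pos h_neg
    (.inr (Filter.mem_of_superset (hG_open.mem_nhds hyG) h_max))
end

section
/- Let v : ℝ⁴ ∖ {0} → ℝ be real analytic and positively homogeneous of order 1, and suppose v satisfies a linear uniformly elliptic equation Σ_{i,j} a_{ij}(x/|x|) ∂²v/∂x_i∂x_j = 0 on ℝ⁴ ∖ {0}, where the coefficients a_{ij} are smooth functions on S³ and there is C ≥ 1 with (1/C)|ξ|² ≤ Σ a_{ij}(θ)ξ_iξ_j ≤ C|ξ|² for all θ ∈ S³, ξ ∈ ℝ⁴. If the Hessian D²v(x) has rank at most 2 at every point x ∈ ℝ⁴ ∖ {0} (equivalently, the gradient map ∇v : S³ → ℝ⁴ has rank at most 2), then v is a linear function. -/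
/-!
Choose a direction `e ≠ 0`. The partial derivative `⟨∇v, e⟩` is homogeneous of order zero, so it
attains its maximum, at some `x₀`; subtracting the linear function `⟨∇v(x₀), ·⟩` we may assume
`∇v(x₀) = 0` and `⟨∇v, e⟩ ≤ 0`, and must show `v = 0`. If `v` is not identically zero, the lowest
homogeneous term `P` of its Taylor expansion at `x₀` solves the constant-coefficient elliptic
equation obtained by freezing the operator at `x₀`, so the strong maximum principle applies to `P`.

If `e` is a multiple of `x₀`, Euler's identity gives `P` a sign, whence `P = 0`, which is absurd.
Otherwise `∂P/∂e ≤ 0` forces `∂P/∂e = 0`, so `e` lies in the kernel of `D²P`. A nonzero Hessian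
annihilated by an elliptic operator is indefinite; with the rank bound, `D²v` has rank exactly two
wherever it does not vanish, and `∇v` is constant along the lines in the direction of its kernel.
The kernels of `D²v` near `x₀` contain vectors close to `e`, so homogeneity gives
`∇v(e) = ∇v(x₀) = 0`, and the first case applies with `e` in place of `x₀`.
-/

open Asymptotics Filter Topology

set_option maxSynthPendingDepth 3

theorem tendsto_clm_apply {α X Y : Type*} [NormedAddCommGroup X] [NormedSpace ℝ X]
    [NormedAddCommGroup Y] [NormedSpace ℝ Y] {l : Filter α} {T : α → X →L[ℝ] Y} {x : α → X}
    {T₀ : X →L[ℝ] Y} {x₀ : X} (hT : Tendsto T l (𝓝 T₀)) (hx : Tendsto x l (𝓝 x₀)) :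
    Tendsto (fun t ↦ T t (x t)) l (𝓝 (T₀ x₀)) :=
  (isBoundedBilinearMap_apply.continuous.tendsto (T₀, x₀)).comp (hT.prodMk_nhds hx)

section EllipticFunctional

variable {E : Type*} [NormedAddCommGroup E] [NormedSpace ℝ E]

/-- Ellipticity of a constant-coefficient second-order operator `f ↦ L (D²f)`, encoded as a linear
functional `L` on bilinear forms: the principal symbol `φ ↦ L (φ ⊗ φ)` is positive on nonzero
covectors. -/
def IsElliptic (L : (E →L[ℝ] E →L[ℝ] ℝ) →L[ℝ] ℝ) : Prop :=
  ∀ φ : E →L[ℝ] ℝ, φ ≠ 0 → 0 < L (φ.smulRight φ)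

/-- The Gram determinant of a symmetric bilinear form on a pair of vectors. -/
noncomputable def gramDet (B : E →L[ℝ] E →L[ℝ] ℝ) (u w : E) : ℝ :=
  B u u * B w w - B u w * B u w

theorem gramDet_smul (c : ℝ) (B : E →L[ℝ] E →L[ℝ] ℝ) (u w : E) :
    gramDet (c • B) u w = c ^ 2 * gramDet B u w := by
  simp only [gramDet, smul_apply, smul_eq_mul]
  ring

theorem differentiableAt_gramDet {X : Type*} [NormedAddCommGroup X] [NormedSpace ℝ X]
    {A : X → E →L[ℝ] E →L[ℝ] ℝ} {x : X} (hA : DifferentiableAt ℝ A x) (u w : E) :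
    DifferentiableAt ℝ (fun y ↦ gramDet (A y) u w) x := by
  unfold gramDet
  fun_prop

theorem tendsto_gramDet {α : Type*} {l : Filter α} {A : α → E →L[ℝ] E →L[ℝ] ℝ}
    {B : E →L[ℝ] E →L[ℝ] ℝ} (hA : Tendsto A l (𝓝 B)) (u w : E) :
    Tendsto (fun t ↦ gramDet (A t) u w) l (𝓝 (gramDet B u w)) :=
  have h := differentiableAt_gramDet (A := fun B ↦ B) (x := B) differentiableAt_fun_id u w
  h.continuousAt.tendsto.comp hA

variable [FiniteDimensional ℝ E] {B : E →L[ℝ] E →L[ℝ] ℝ} {L : (E →L[ℝ] E →L[ℝ] ℝ) →L[ℝ] ℝ}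

theorem exists_basis_eq_sum_smul_smulRight_coord (hB : ∀ x y, B x y = B y x) :
    ∃ b : Module.Basis (Fin (Module.finrank ℝ E)) ℝ E,
      B = ∑ i, B (b i) (b i) •
        (b.coord i).toContinuousLinearMap.smulRight (b.coord i).toContinuousLinearMap := by
  obtain ⟨b, hb⟩ := LinearMap.BilinForm.exists_orthogonal_basis
    (B := B.toLinearMap₁₂) ⟨fun x y ↦ hB x y⟩
  refine ⟨b, ?_⟩
  have on_basis : ∀ i j, B (b i) (b j) = (∑ k, B (b k) (b k) •
      (b.coord k).toContinuousLinearMap.smulRight (b.coord k).toContinuousLinearMap)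
        (b i) (b j) := by
    intro i j
    rcases eq_or_ne i j with rfl | hij
    · simp [Finsupp.single_apply]
    · have : B (b i) (b j) = 0 := hb hij
      simp [Finsupp.single_apply, this, hij]
  apply ContinuousLinearMap.coe_injective
  refine b.ext fun i ↦ ContinuousLinearMap.coe_injective (b.ext fun j ↦ on_basis i j)

namespace IsElliptic

theorem pos_of_ne_zero (hL : IsElliptic L) (hB : ∀ x y, B x y = B y x) (hpos : ∀ x, 0 ≤ B x x)
    (hne : B ≠ 0) : 0 < L B := by
  obtain ⟨b, hb⟩ := exists_basis_eq_sum_smul_smulRight_coord hB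
  set φ : Fin (Module.finrank ℝ E) → E →L[ℝ] ℝ := fun i ↦ (b.coord i).toContinuousLinearMap
  have symbol_pos : ∀ i, 0 < L ((φ i).smulRight (φ i)) := fun i ↦ hL _ fun h ↦ by
    simpa [φ] using congr($h (b i))
  obtain ⟨k, hk⟩ : ∃ k, B (b k) (b k) ≠ 0 := by
    by_contra! h
    exact hne (hb.trans (Finset.sum_eq_zero fun i _ ↦ by rw [h i, zero_smul]))
  have expand : L B = ∑ i, B (b i) (b i) * L ((φ i).smulRight (φ i)) := by
    conv_lhs => rw [hb]
    simp only [map_sum, map_smul, smul_eq_mul, φ]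
  rw [expand]
  exact Finset.sum_pos' (fun i _ ↦ mul_nonneg (hpos _) (symbol_pos i).le)
    ⟨k, Finset.mem_univ k, mul_pos ((hpos _).lt_of_ne' hk) (symbol_pos k)⟩

theorem nonneg (hL : IsElliptic L) (hB : ∀ x y, B x y = B y x) (hpos : ∀ x, 0 ≤ B x x) :
    0 ≤ L B := by
  rcases eq_or_ne B 0 with rfl | hne
  · simp
  · exact (hL.pos_of_ne_zero hB hpos hne).le

theorem exists_apply_self_neg (hL : IsElliptic L) (hB : ∀ x y, B x y = B y x) (hLB : L B = 0)
    (hne : B ≠ 0) : ∃ x, B x x < 0 := by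
  by_contra! h
  exact (hL.pos_of_ne_zero hB h hne).ne' hLB

theorem exists_gramDet_ne_zero (hL : IsElliptic L) (hB : ∀ x y, B x y = B y x) (hLB : L B = 0)
    (hne : B ≠ 0) : ∃ u w, gramDet B u w ≠ 0 := by
  obtain ⟨u, hu⟩ := hL.exists_apply_self_neg hB hLB hne
  obtain ⟨w, hw⟩ := hL.exists_apply_self_neg (fun x y ↦ congrArg Neg.neg (hB x y))
    (by rw [map_neg, hLB, neg_zero]) (neg_ne_zero.mpr hne)
  replace hw : 0 < B w w := neg_lt_zero.mp hw
  have : gramDet B u w < 0 := by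
    have := mul_neg_of_neg_of_pos hu hw
    have := mul_self_nonneg (B u w)
    unfold gramDet
    linarith
  exact ⟨u, w, this.ne⟩

end IsElliptic

end EllipticFunctional

section RankTwo

variable {E : Type*} [NormedAddCommGroup E] [NormedSpace ℝ E]

/-- The generalized inverse of a symmetric bilinear form `B` on the plane spanned by `u` and `w`,
written out by Cramer's rule: it sends a functional `φ` to the vector `x` of that plane for which
`B x` and `φ` agree on the plane. It is meaningful only if `gramDet B u w ≠ 0`. -/
noncomputable def planeInverse (u w : E) (B : E →L[ℝ] E →L[ℝ] ℝ) (φ : E →L[ℝ] ℝ) : E :=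
  ((gramDet B u w)⁻¹ * (B w w * φ u - B u w * φ w)) • u
    + ((gramDet B u w)⁻¹ * (B u u * φ w - B u w * φ u)) • w

variable {B : E →L[ℝ] E →L[ℝ] ℝ} {u w : E}

theorem apply_planeInverse_left (hB : ∀ x y, B x y = B y x) (h : gramDet B u w ≠ 0)
    (φ : E →L[ℝ] ℝ) : B (planeInverse u w B φ) u = φ u := by
  simp only [planeInverse, add_apply, smul_apply, map_add, map_smul, smul_eq_mul, hB w u]
  field_simp
  rw [gramDet]
  ring

theorem apply_planeInverse_right (h : gramDet B u w ≠ 0) (φ : E →L[ℝ] ℝ) :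
    B (planeInverse u w B φ) w = φ w := by
  simp only [planeInverse, add_apply, smul_apply, map_add, map_smul, smul_eq_mul]
  field_simp
  rw [gramDet]
  ring

theorem planeInverse_smul {c : ℝ} (hc : c ≠ 0) (u w : E) (B : E →L[ℝ] E →L[ℝ] ℝ)
    (φ : E →L[ℝ] ℝ) : planeInverse u w (c • B) (c • φ) = planeInverse u w B φ := by
  simp only [planeInverse, gramDet_smul, smul_apply, smul_eq_mul]
  congr 2 <;> field_simp

theorem differentiableAt_planeInverse {X : Type*} [NormedAddCommGroup X] [NormedSpace ℝ X]
    {A : X → E →L[ℝ] E →L[ℝ] ℝ} {φ : X → E →L[ℝ] ℝ} {x : X} (hA : DifferentiableAt ℝ A x)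
    (hφ : DifferentiableAt ℝ φ x) (h : gramDet (A x) u w ≠ 0) :
    DifferentiableAt ℝ (fun y ↦ planeInverse u w (A y) (φ y)) x := by
  have hinv := (differentiableAt_gramDet hA u w).fun_inv h
  unfold planeInverse
  fun_prop

theorem planeInverse_isBigO {α : Type*} {l : Filter α} {A : α → E →L[ℝ] E →L[ℝ] ℝ}
    (hA : Tendsto A l (𝓝 B)) (h : gramDet B u w ≠ 0) (φ : α → E →L[ℝ] ℝ) :
    (fun t ↦ planeInverse u w (A t) (φ t)) =O[l] φ := by
  have hinv := ((tendsto_gramDet hA u w).inv₀ h).isBigO_one ℝ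
  have hentry (p q : E) : (fun t ↦ A t p q) =O[l] (fun _ ↦ (1 : ℝ)) :=
    (tendsto_clm_apply (tendsto_clm_apply hA tendsto_const_nhds) tendsto_const_nhds).isBigO_one ℝ
  have hφ (p : E) : (fun t ↦ φ t p) =O[l] fun t ↦ ‖φ t‖ :=
    ((ContinuousLinearMap.apply ℝ ℝ p).isBigO_comp φ l).norm_right
  have hterm {a b c d p q : E} (y : E) : (fun t ↦
      ((gramDet (A t) u w)⁻¹ * (A t a b * φ t p - A t c d * φ t q)) • y) =O[l] φ := by
    have hcoeff := hinv.mul (((hentry a b).mul (hφ p)).sub ((hentry c d).mul (hφ q)))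
    simpa using hcoeff.smul (isBigO_const_const y (one_ne_zero (α := ℝ)) l)
  exact (hterm u).add (hterm w)

theorem linearIndependent_of_gramDet_ne_zero (hB : ∀ x y, B x y = B y x)
    (h : gramDet B u w ≠ 0) : LinearIndependent ℝ ![B u, B w] := by
  refine LinearIndependent.pair_iff.mpr fun s t hst ↦ ?_
  have hu : s * B u u + t * B u w = 0 := by simpa [hB w u] using congr($hst u)
  have hw : s * B u w + t * B w w = 0 := by simpa using congr($hst w)
  have hs : s * gramDet B u w = 0 := by
    unfold gramDet
    linear_combination B w w * hu - B u w * hw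
  have ht : t * gramDet B u w = 0 := by
    unfold gramDet
    linear_combination B u u * hw - B u w * hu
  exact ⟨(mul_eq_zero.mp hs).resolve_right h, (mul_eq_zero.mp ht).resolve_right h⟩

theorem tendsto_sub_planeInverse {α : Type*} {l : Filter α} {A : α → E →L[ℝ] E →L[ℝ] ℝ}
    {c : α → ℝ} (hc : ∀ᶠ t in l, c t ≠ 0) (hA : Tendsto (fun t ↦ c t • A t) l (𝓝 B))
    (h : gramDet B u w ≠ 0) {e : E} (he : B e = 0) :
    Tendsto (fun t ↦ e - planeInverse u w (A t) (A t e)) l (𝓝 e) := by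
  have happ : Tendsto (fun t ↦ (c t • A t) e) l (𝓝 0) :=
    he ▸ tendsto_clm_apply hA tendsto_const_nhds
  have hlim := ((planeInverse_isBigO hA h fun t ↦ (c t • A t) e).trans_tendsto happ).const_sub e
  rw [sub_zero] at hlim
  refine hlim.congr' ?_
  filter_upwards [hc] with t ht
  rw [smul_apply, planeInverse_smul ht]

theorem eventually_gramDet_ne_zero {α : Type*} {l : Filter α} {A : α → E →L[ℝ] E →L[ℝ] ℝ}
    {c : α → ℝ} (hA : Tendsto (fun t ↦ c t • A t) l (𝓝 B)) (h : gramDet B u w ≠ 0) :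
    ∀ᶠ t in l, gramDet (A t) u w ≠ 0 := by
  filter_upwards [(tendsto_gramDet hA u w).eventually_ne h] with t ht h0
  exact ht (by rw [gramDet_smul, h0, mul_zero])

variable [FiniteDimensional ℝ E]

theorem span_pair_eq_range_of_finrank_le_two (hB : ∀ x y, B x y = B y x)
    (hrank : Module.finrank ℝ (B.range) ≤ 2) (h : gramDet B u w ≠ 0) :
    Submodule.span ℝ (Set.range ![B u, B w]) = B.range := by
  refine Submodule.eq_of_le_of_finrank_le ?_ ?_
  · rw [Submodule.span_le, Set.range_subset_iff]
    intro i
    fin_cases i <;> simp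
  · rwa [finrank_span_eq_card (linearIndependent_of_gramDet_ne_zero hB h), Fintype.card_fin]

theorem apply_eq_zero_of_finrank_range_le_two (hB : ∀ x y, B x y = B y x)
    (hrank : Module.finrank ℝ (B.range) ≤ 2) (h : gramDet B u w ≠ 0) {q : E}
    (hu : B q u = 0) (hw : B q w = 0) : B q = 0 := by
  ext p
  have hp : B p ∈ Submodule.span ℝ {B u, B w} := by
    rw [← Matrix.range_cons_cons_empty (B u) (B w) ![],
      span_pair_eq_range_of_finrank_le_two hB hrank h]
    exact LinearMap.mem_range_self _ p
  obtain ⟨s, t, hst⟩ := Submodule.mem_span_pair.mp hp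
  rw [hB q p, ← hst]
  simp [hB u q, hB w q, hu, hw]

theorem apply_sub_planeInverse_eq_zero (hB : ∀ x y, B x y = B y x)
    (hrank : Module.finrank ℝ (B.range) ≤ 2) (h : gramDet B u w ≠ 0) (ξ : E) :
    B (ξ - planeInverse u w B (B ξ)) = 0 :=
  apply_eq_zero_of_finrank_range_le_two hB hrank h
    (by rw [map_sub, sub_apply, apply_planeInverse_left hB h, sub_self])
    (by rw [map_sub, sub_apply, apply_planeInverse_right h, sub_self])

end RankTwo

section MaximumPrinciple

theorem deriv_deriv_nonneg_of_isLocalMin {f : ℝ → ℝ} {x : ℝ} (hf : ContinuousAt f x)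
    (hmin : IsLocalMin f x) : 0 ≤ deriv (deriv f) x := by
  by_contra! hneg
  have hmax := isLocalMax_of_deriv_deriv_neg hneg hmin.deriv_eq_zero hf
  have hconst : f =ᶠ[𝓝 x] fun _ ↦ f x := by
    filter_upwards [hmin, hmax] with t hle hge using le_antisymm hge hle
  rw [hconst.deriv.deriv_eq] at hneg
  simp at hneg

theorem tendsto_add_smul {X : Type*} [NormedAddCommGroup X] [NormedSpace ℝ X] (x p : X) :
    Tendsto (fun t : ℝ ↦ x + t • p) (𝓝 0) (𝓝 x) := by
  have : Continuous fun t : ℝ ↦ x + t • p := by fun_prop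
  simpa using this.tendsto 0

theorem hasDerivAt_comp_add_smul {X Y : Type*} [NormedAddCommGroup X] [NormedSpace ℝ X]
    [NormedAddCommGroup Y] [NormedSpace ℝ Y] {f : X → Y} {x p : X} {t : ℝ}
    (hf : DifferentiableAt ℝ f (x + t • p)) :
    HasDerivAt (fun s : ℝ ↦ f (x + s • p)) (fderiv ℝ f (x + t • p) p) t :=
  hf.hasFDerivAt.comp_hasDerivAt t (by simpa using ((hasDerivAt_id t).smul_const p).const_add x)

theorem fderiv_fderiv_nonneg_of_isLocalMin {E : Type*} [NormedAddCommGroup E] [NormedSpace ℝ E]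
    {f : E → ℝ} {x : E} (hf : ContDiffAt ℝ 2 f x) (hmin : IsLocalMin f x) (p : E) :
    0 ≤ fderiv ℝ (fderiv ℝ f) x p p := by
  have hline := tendsto_add_smul x p
  have hfirst : deriv (fun t : ℝ ↦ f (x + t • p)) =ᶠ[𝓝 0] fun t ↦ fderiv ℝ f (x + t • p) p := by
    filter_upwards [hline.eventually (hf.eventually (by simp))] with t ht
    exact (hasDerivAt_comp_add_smul (ht.differentiableAt (by simp))).deriv
  have hsecond : HasDerivAt (fun t : ℝ ↦ fderiv ℝ f (x + t • p) p)
      (fderiv ℝ (fderiv ℝ f) x p p) 0 := by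
    have hgrad := (hf.fderiv_right (m := 1) le_rfl).differentiableAt one_ne_zero
    have hline_deriv := hasDerivAt_comp_add_smul (p := p) (t := 0) (by simpa using hgrad)
    rw [zero_smul, add_zero] at hline_deriv
    exact (ContinuousLinearMap.apply ℝ ℝ p).hasFDerivAt.comp_hasDerivAt 0 hline_deriv
  rw [← hsecond.deriv, ← hfirst.deriv_eq]
  refine deriv_deriv_nonneg_of_isLocalMin ?_ ?_
  · exact (hasDerivAt_comp_add_smul (by simpa using hf.differentiableAt (by simp))).continuousAt
  · simpa [IsLocalMin, IsMinFilter] using hline.eventually hmin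

theorem IsElliptic.nonneg_of_isLocalMin {E : Type*} [NormedAddCommGroup E] [NormedSpace ℝ E]
    [FiniteDimensional ℝ E] {L : (E →L[ℝ] E →L[ℝ] ℝ) →L[ℝ] ℝ} (hL : IsElliptic L)
    {f : E → ℝ} {x : E} (hf : ContDiffAt ℝ 2 f x) (hmin : IsLocalMin f x) :
    0 ≤ L (fderiv ℝ (fderiv ℝ f) x) :=
  hL.nonneg (hf.isSymmSndFDerivAt (by simp)) (fderiv_fderiv_nonneg_of_isLocalMin hf hmin)

theorem fderiv_fderiv_sub_const_smul {X Y : Type*} [NormedAddCommGroup X] [NormedSpace ℝ X]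
    [NormedAddCommGroup Y] [NormedSpace ℝ Y] {f g : X → Y} {x : X} (hf : ContDiffAt ℝ 2 f x)
    (hg : ContDiffAt ℝ 2 g x) (m : ℝ) :
    fderiv ℝ (fderiv ℝ fun y ↦ f y - m • g y) x
      = fderiv ℝ (fderiv ℝ f) x - m • fderiv ℝ (fderiv ℝ g) x := by
  have hfirst : (fderiv ℝ fun y ↦ f y - m • g y) =ᶠ[𝓝 x]
      fun y ↦ fderiv ℝ f y - m • fderiv ℝ g y := by
    filter_upwards [hf.eventually (by simp), hg.eventually (by simp)] with y hfy hgy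
    exact ((hfy.differentiableAt (by simp)).hasFDerivAt.sub
      ((hgy.differentiableAt (by simp)).hasFDerivAt.const_smul m)).fderiv
  rw [hfirst.fderiv_eq]
  exact (((hf.fderiv_right (m := 1) le_rfl).differentiableAt one_ne_zero).hasFDerivAt.sub
    (((hg.fderiv_right (m := 1) le_rfl).differentiableAt one_ne_zero).hasFDerivAt.const_smul
      m)).fderiv

variable {E : Type*} [NormedAddCommGroup E]

/-- The Gaussian `exp (-α ‖y - c‖²)`, the barrier function of the strong maximum principle. -/
noncomputable def gaussianBarrier (α : ℝ) (c y : E) : ℝ :=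
  Real.exp (-α * ‖y - c‖ ^ 2)

theorem gaussianBarrier_le_one {α : ℝ} (hα : 0 ≤ α) (c y : E) : gaussianBarrier α c y ≤ 1 :=
  Real.exp_le_one_iff.mpr (mul_nonpos_of_nonpos_of_nonneg (neg_nonpos.mpr hα) (sq_nonneg _))

theorem gaussianBarrier_lt_gaussianBarrier {α : ℝ} (hα : 0 < α) {c x y : E}
    (h : ‖x - c‖ < ‖y - c‖) : gaussianBarrier α c y < gaussianBarrier α c x :=
  Real.exp_lt_exp.mpr (mul_lt_mul_of_neg_left (by gcongr) (neg_neg_of_pos hα))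

variable [InnerProductSpace ℝ E]

/-- The inner product of a real space, typed as a linear rather than a conjugate-linear map into
the dual. -/
noncomputable def innerForm : E →L[ℝ] E →L[ℝ] ℝ :=
  innerSL ℝ

theorem innerForm_apply (x y : E) : innerForm x y = inner ℝ x y :=
  rfl

theorem contDiff_gaussianBarrier (α : ℝ) (c : E) {n : WithTop ℕ∞} :
    ContDiff ℝ n (gaussianBarrier α c) :=
  (contDiff_const.mul ((contDiff_id.sub contDiff_const).norm_sq ℝ)).exp

theorem hasFDerivAt_gaussianBarrier (α : ℝ) (c y : E) :
    HasFDerivAt (gaussianBarrier α c)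
      ((-2 * α * gaussianBarrier α c y) • innerForm (y - c)) y := by
  refine ((((hasFDerivAt_id (𝕜 := ℝ) y).sub_const c).norm_sq.const_mul (-α)).exp).congr_fderiv ?_
  ext p
  simp only [gaussianBarrier, id_eq, smul_apply, ContinuousLinearMap.comp_apply,
    ContinuousLinearMap.id_apply, innerSL_apply_apply, innerForm_apply, smul_eq_mul,
    nsmul_eq_mul, Nat.cast_ofNat]
  ring

theorem fderiv_fderiv_gaussianBarrier (α : ℝ) (c y : E) :
    fderiv ℝ (fderiv ℝ (gaussianBarrier α c)) y = gaussianBarrier α c y •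
      ((4 * α ^ 2) • (innerForm (y - c)).smulRight (innerForm (y - c))
        - (2 * α) • innerForm) := by
  have hgrad : fderiv ℝ (gaussianBarrier α c)
      = fun y ↦ (-2 * α * gaussianBarrier α c y) • innerForm (y - c) :=
    funext fun y ↦ (hasFDerivAt_gaussianBarrier α c y).fderiv
  have hinner : HasFDerivAt (fun y ↦ innerForm (y - c)) innerForm y :=
    innerForm.hasFDerivAt.comp y ((hasFDerivAt_id (𝕜 := ℝ) y).sub_const c)
  rw [hgrad, (((hasFDerivAt_gaussianBarrier α c y).const_mul (-2 * α)).fun_smul hinner).fderiv]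
  ext p q
  simp only [add_apply, sub_apply, smul_apply, ContinuousLinearMap.smulRight_apply, smul_eq_mul]
  ring

theorem exists_isLocalMin_sub_gaussianBarrier [ProperSpace E] {f : E → ℝ} (hf : Continuous f)
    {x₀ c : E} (hmin : ∀ y, f x₀ ≤ f y) {m ρ α : ℝ} (hm : 0 < m) (hα : 0 < α)
    (hball : ∀ y, ‖y - c‖ ≤ ρ → f x₀ + m < f y) :
    ∃ y, ρ < ‖y - c‖ ∧ IsLocalMin (fun y ↦ f y - m • gaussianBarrier α c y) y := by
  set annulus := {y : E | ρ < ‖y - c‖ ∧ ‖y - c‖ < ‖x₀ - c‖ + 1}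
  have hopen : IsOpen annulus :=
    (isOpen_lt continuous_const (continuous_id.sub continuous_const).norm).inter
      (isOpen_lt (continuous_id.sub continuous_const).norm continuous_const)
  have hboundary : ∀ y ∈ Metric.closedBall c (‖x₀ - c‖ + 1) \ annulus,
      f x₀ - m • gaussianBarrier α c x₀ < f y - m • gaussianBarrier α c y := by
    rintro y ⟨-, hy⟩
    simp only [smul_eq_mul]
    rcases le_or_gt ‖y - c‖ ρ with hyρ | hyρ
    · have hx₀_pos : 0 < gaussianBarrier α c x₀ := Real.exp_pos _
      nlinarith [hball y hyρ, gaussianBarrier_le_one hα.le c y]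
    · have hyR : ‖x₀ - c‖ + 1 ≤ ‖y - c‖ := not_lt.mp fun h ↦ hy ⟨hyρ, h⟩
      nlinarith [hmin y,
        gaussianBarrier_lt_gaussianBarrier hα (show ‖x₀ - c‖ < ‖y - c‖ by linarith)]
  have hcont : Continuous fun y ↦ f y - m • gaussianBarrier α c y :=
    hf.sub ((contDiff_gaussianBarrier (n := 0) α c).continuous.const_smul m)
  obtain ⟨y, hy, hloc⟩ :=
    (isCompact_closedBall c (‖x₀ - c‖ + 1)).exists_isLocalMin_mem_open (z := x₀)
      (fun y hy ↦ mem_closedBall_iff_norm.mpr hy.2.le) hcont.continuousOn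
      (mem_closedBall_iff_norm.mpr (by linarith)) hboundary hopen
  exact ⟨y, hy.1, hloc⟩

namespace IsElliptic

variable [FiniteDimensional ℝ E] {L : (E →L[ℝ] E →L[ℝ] ℝ) →L[ℝ] ℝ}

theorem exists_pos_mul_sq_norm_le (hL : IsElliptic L) :
    ∃ κ > 0, ∀ z, κ * ‖z‖ ^ 2 ≤ L ((innerForm z).smulRight (innerForm z)) := by
  rcases subsingleton_or_nontrivial E with _ | _
  · exact ⟨1, one_pos, fun z ↦ by simp [Subsingleton.elim z 0]⟩
  have hcont : Continuous fun z : E ↦ L ((innerForm z).smulRight (innerForm z)) := by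
    have : Continuous fun z : E ↦ (innerForm z).smulRight (innerForm z) :=
      (ContinuousLinearMap.smulRightL ℝ E (E →L[ℝ] ℝ)).isBoundedBilinearMap.continuous.comp
        (innerForm.continuous.prodMk innerForm.continuous)
    exact L.continuous.comp this
  obtain ⟨z₀, hz₀, hmin⟩ := (isCompact_sphere (0 : E) 1).exists_isMinOn
    (NormedSpace.sphere_nonempty.mpr zero_le_one) hcont.continuousOn
  rw [mem_sphere_zero_iff_norm] at hz₀
  refine ⟨_, hL (innerForm z₀) fun h ↦ ?_, fun z ↦ ?_⟩
  · have : inner ℝ z₀ z₀ = (0 : ℝ) := congr($h z₀)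
    simp [hz₀] at this
  rcases eq_or_ne z 0 with rfl | hz
  · simp
  have hle : _ ≤ L ((innerForm (‖z‖⁻¹ • z)).smulRight (innerForm (‖z‖⁻¹ • z))) :=
    hmin (by simp [norm_smul, hz])
  have hscale : (innerForm (‖z‖⁻¹ • z)).smulRight (innerForm (‖z‖⁻¹ • z))
      = (‖z‖ ^ 2)⁻¹ • (innerForm z).smulRight (innerForm z) := by
    ext p q
    simp only [map_smul, smul_apply, ContinuousLinearMap.smulRight_apply, smul_eq_mul]
    ring
  rw [hscale, map_smul, smul_eq_mul, inv_mul_eq_div] at hle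
  exact (le_div_iff₀ (by positivity)).mp hle

theorem exists_gaussianBarrier_pos (hL : IsElliptic L) {ρ : ℝ} (hρ : 0 < ρ) :
    ∃ α > 0, ∀ c y, ρ ≤ ‖y - c‖ →
      0 < L (fderiv ℝ (fderiv ℝ (gaussianBarrier α c)) y) := by
  obtain ⟨κ, hκ, hsymbol⟩ := hL.exists_pos_mul_sq_norm_le
  set τ := L innerForm
  have hκρ : 0 < κ * ρ ^ 2 := by positivity
  refine ⟨(|τ| + 1) / (κ * ρ ^ 2), by positivity, fun c y hy ↦ ?_⟩
  set α := (|τ| + 1) / (κ * ρ ^ 2)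
  have hατ : α * (κ * ρ ^ 2) = |τ| + 1 := div_mul_cancel₀ _ hκρ.ne'
  have hαpos : 0 < α := by positivity
  rw [fderiv_fderiv_gaussianBarrier, map_smul, map_sub, map_smul, map_smul]
  simp only [smul_eq_mul]
  refine mul_pos (Real.exp_pos _) ?_
  have hlow : κ * ρ ^ 2 ≤ L ((innerForm (y - c)).smulRight (innerForm (y - c))) :=
    (by gcongr : κ * ρ ^ 2 ≤ κ * ‖y - c‖ ^ 2).trans (hsymbol _)
  nlinarith [le_abs_self τ, abs_nonneg τ, mul_le_mul_of_nonneg_left hlow hαpos.le]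

theorem eq_of_forall_le (hL : IsElliptic L) {f : E → ℝ} (hf : ContDiff ℝ 2 f)
    (hLf : ∀ y, L (fderiv ℝ (fderiv ℝ f) y) ≤ 0) {x₀ : E} (hmin : ∀ y, f x₀ ≤ f y) (c : E) :
    f c = f x₀ := by
  by_contra hne
  obtain ⟨m, hm, hmc⟩ : ∃ m > 0, f x₀ + m < f c :=
    ⟨(f c - f x₀) / 2, by linarith [(hmin c).lt_of_ne' hne], by linarith [(hmin c).lt_of_ne' hne]⟩
  obtain ⟨ρ, hρ, hball⟩ : ∃ ρ > 0, Metric.closedBall c ρ ⊆ {y | f x₀ + m < f y} :=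
    Metric.nhds_basis_closedBall.mem_iff.mp
      (hf.continuous.continuousAt.eventually (lt_mem_nhds hmc))
  obtain ⟨α, hα, hbarrier⟩ := hL.exists_gaussianBarrier_pos hρ
  obtain ⟨y, hy, hloc⟩ := exists_isLocalMin_sub_gaussianBarrier hf.continuous hmin hm hα
    fun y hy ↦ hball (mem_closedBall_iff_norm.mpr hy)
  have hg := contDiff_gaussianBarrier (n := 2) α c
  have hLh : L (fderiv ℝ (fderiv ℝ fun y ↦ f y - m • gaussianBarrier α c y) y) < 0 := by
    rw [fderiv_fderiv_sub_const_smul hf.contDiffAt hg.contDiffAt, map_sub, map_smul,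
      smul_eq_mul]
    linarith [hLf y, mul_pos hm (hbarrier c y hy.le)]
  have hh : ContDiff ℝ 2 fun y ↦ f y - m • gaussianBarrier α c y := hf.sub (contDiff_const.mul hg)
  exact hLh.not_ge (hL.nonneg_of_isLocalMin hh.contDiffAt hloc)

theorem eq_zero_of_mul_nonneg (hL : IsElliptic L) {f : E → ℝ} (hf : ContDiff ℝ 2 f)
    (hLf : ∀ y, L (fderiv ℝ (fderiv ℝ f) y) = 0) {x₀ : E} (hx₀ : f x₀ = 0) {s : ℝ} (hs : s ≠ 0)
    (hnonneg : ∀ y, 0 ≤ s * f y) (y : E) : f y = 0 := by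
  have hLsf : ∀ y, L (fderiv ℝ (fderiv ℝ (s • f)) y) ≤ 0 := fun y ↦ by
    rw [fderiv_const_smul_field, fderiv_const_smul_field, Pi.smul_apply, map_smul, hLf,
      smul_zero]
  have hconst := hL.eq_of_forall_le (contDiff_const.smul hf) hLsf (x₀ := x₀)
    (by simpa [hx₀] using hnonneg) y
  simpa [hx₀, hs] using hconst

end IsElliptic

end MaximumPrinciple

section TaylorTerms

variable {X Y : Type*} [NormedAddCommGroup X] [NormedSpace ℝ X] [NormedAddCommGroup Y]
  [NormedSpace ℝ Y] {f : X → Y} {x₀ : X} {k : ℕ}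

/-- The homogeneous part of degree `k` of the Taylor expansion of `f` at `x₀`, as a function of the
displacement from `x₀`. -/
noncomputable def taylorTerm (f : X → Y) (x₀ : X) (k : ℕ) (y : X) : Y :=
  (k.factorial : ℝ)⁻¹ • iteratedFDeriv ℝ k f x₀ fun _ ↦ y

theorem contDiff_taylorTerm (f : X → Y) (x₀ : X) (k : ℕ) {n : WithTop ℕ∞} :
    ContDiff ℝ n (taylorTerm f x₀ k) :=
  contDiff_const.smul
    ((iteratedFDeriv ℝ k f x₀).contDiff.comp (contDiff_pi.mpr fun _ ↦ contDiff_id))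

theorem taylorTerm_smul (f : X → Y) (x₀ : X) (k : ℕ) (t : ℝ) (y : X) :
    taylorTerm f x₀ k (t • y) = t ^ k • taylorTerm f x₀ k y := by
  have h := (iteratedFDeriv ℝ k f x₀).map_smul_univ (fun _ ↦ t) fun _ ↦ y
  rw [Finset.prod_const, Finset.card_univ, Fintype.card_fin] at h
  rw [taylorTerm, taylorTerm, h, smul_comm]

theorem taylorTerm_fderiv_apply_self (f : X → Y) (x₀ : X) (k : ℕ) (y : X) :
    taylorTerm (fderiv ℝ f) x₀ k y y = (k + 1 : ℝ) • taylorTerm f x₀ (k + 1) y := by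
  have hk : (k + 1 : ℝ) ≠ 0 := by positivity
  simp only [taylorTerm, smul_apply, iteratedFDeriv_succ_apply_right]
  rw [smul_smul, Nat.factorial_succ, Nat.cast_mul, Nat.cast_succ, mul_inv,
    mul_inv_cancel_left₀ hk]
  rfl

theorem iteratedFDeriv_succ_apply_update [CompleteSpace Y] (hf : AnalyticAt ℝ f x₀) (k : ℕ)
    (y e : X) (i : Fin (k + 1)) :
    iteratedFDeriv ℝ (k + 1) f x₀ (Function.update (fun _ ↦ y) i e)
      = iteratedFDeriv ℝ k (fderiv ℝ f) x₀ (fun _ ↦ y) e := by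
  have hswap : Function.update (fun _ : Fin (k + 1) ↦ y) i e
      = Function.update (fun _ ↦ y) (Fin.last k) e ∘ Equiv.swap (Fin.last k) i := by
    rw [Function.update_comp_equiv]
    simp [Function.comp_def]
  have hinit : Fin.init (Function.update (fun _ : Fin (k + 1) ↦ y) (Fin.last k) e) = fun _ ↦ y :=
    Fin.init_update_last _ _
  rw [hswap, (hf.contDiffAt (n := ⊤)).iteratedFDeriv_comp_perm, iteratedFDeriv_succ_apply_right,
    hinit, Function.update_self]

theorem hasFDerivAt_taylorTerm [CompleteSpace Y] (hf : AnalyticAt ℝ f x₀) (k : ℕ) (y : X) :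
    HasFDerivAt (taylorTerm f x₀ (k + 1)) (taylorTerm (fderiv ℝ f) x₀ k y) y := by
  have hdiag : HasFDerivAt (fun y : X ↦ fun _ : Fin (k + 1) ↦ y)
      (ContinuousLinearMap.pi fun _ ↦ ContinuousLinearMap.id ℝ X) y :=
    hasFDerivAt_pi.mpr fun _ ↦ hasFDerivAt_id y
  refine ((((iteratedFDeriv ℝ (k + 1) f x₀).hasFDerivAt fun _ ↦ y).comp y hdiag).const_smul
    ((k + 1).factorial : ℝ)⁻¹).congr_fderiv ?_
  have hfactorial : ((k + 1).factorial : ℝ)⁻¹ * (k + 1 : ℕ) = (k.factorial : ℝ)⁻¹ := by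
    have := k.factorial_ne_zero
    rw [Nat.factorial_succ, Nat.cast_mul]
    field_simp
  ext e
  simp only [taylorTerm, ContinuousLinearMap.comp_apply, smul_apply,
    ContinuousMultilinearMap.linearDeriv_apply, ContinuousLinearMap.pi_apply,
    ContinuousLinearMap.id_apply, iteratedFDeriv_succ_apply_update hf, Finset.sum_const,
    Finset.card_univ, Fintype.card_fin]
  rw [← Nat.cast_smul_eq_nsmul ℝ, smul_smul, hfactorial]

theorem fderiv_taylorTerm [CompleteSpace Y] (hf : AnalyticAt ℝ f x₀) (k : ℕ) :
    fderiv ℝ (taylorTerm f x₀ (k + 1)) = taylorTerm (fderiv ℝ f) x₀ k :=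
  funext fun y ↦ (hasFDerivAt_taylorTerm hf k y).fderiv

theorem exists_hasFPowerSeriesAt_apply_eq_taylorTerm [CompleteSpace Y] (hf : AnalyticAt ℝ f x₀) :
    ∃ p : FormalMultilinearSeries ℝ X Y, HasFPowerSeriesAt f p x₀ ∧
      ∀ k y, p k (fun _ ↦ y) = taylorTerm f x₀ k y := by
  obtain ⟨p, r, hp⟩ := hf
  refine ⟨p, ⟨r, hp⟩, fun k y ↦ ?_⟩
  have hk : (k.factorial : ℝ) ≠ 0 := Nat.cast_ne_zero.mpr k.factorial_ne_zero
  rw [taylorTerm, ← hp.factorial_smul, ← Nat.cast_smul_eq_nsmul ℝ, inv_smul_smul₀ hk]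

/-- All Taylor terms of `f` at `x₀` of degree less than `k` vanish. -/
def VanishesToOrder (f : X → Y) (x₀ : X) (k : ℕ) : Prop :=
  ∀ j < k, ∀ y, taylorTerm f x₀ j y = 0

namespace VanishesToOrder

variable [CompleteSpace Y]

protected theorem fderiv (h : VanishesToOrder f x₀ (k + 1)) (hf : AnalyticAt ℝ f x₀) :
    VanishesToOrder (fderiv ℝ f) x₀ k := fun j hj y ↦ by
  rw [← fderiv_taylorTerm hf, funext (h (j + 1) (by lia))]
  exact fderiv_const_apply 0

theorem isBigO_sub_taylorTerm (h : VanishesToOrder f x₀ k) (hf : AnalyticAt ℝ f x₀) :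
    (fun y ↦ f (x₀ + y) - taylorTerm f x₀ k y) =O[𝓝 0] fun y ↦ ‖y‖ ^ (k + 1) := by
  obtain ⟨p, hp, hterm⟩ := exists_hasFPowerSeriesAt_apply_eq_taylorTerm hf
  convert hp.isBigO_sub_partialSum_pow (k + 1) using 3 with y
  rw [FormalMultilinearSeries.partialSum, Finset.sum_range_succ, hterm, Finset.sum_eq_zero,
    zero_add]
  exact fun j hj ↦ (hterm j y).trans (h j (Finset.mem_range.mp hj) y)

theorem tendsto_taylorTerm (h : VanishesToOrder f x₀ k) (hf : AnalyticAt ℝ f x₀) (y : X) :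
    Tendsto (fun t : ℝ ↦ (t ^ k)⁻¹ • f (x₀ + t • y)) (𝓝[>] 0) (𝓝 (taylorTerm f x₀ k y)) := by
  have hray : Tendsto (fun t : ℝ ↦ t • y) (𝓝[>] 0) (𝓝 0) := by
    simpa using (tendsto_add_smul 0 y).mono_left nhdsWithin_le_nhds
  have hscaled := (isBigO_refl (fun t : ℝ ↦ (t ^ k)⁻¹) (𝓝[>] 0)).smul
    ((h.isBigO_sub_taylorTerm hf).comp_tendsto hray)
  have hlinear : Tendsto (fun t : ℝ ↦ t * ‖y‖ ^ (k + 1)) (𝓝[>] 0) (𝓝 0) := by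
    have : Continuous fun t : ℝ ↦ t * ‖y‖ ^ (k + 1) := by fun_prop
    simpa using (this.tendsto 0).mono_left nhdsWithin_le_nhds
  have hlim : Tendsto (fun t : ℝ ↦ (t ^ k)⁻¹ • f (x₀ + t • y) - taylorTerm f x₀ k y)
      (𝓝[>] 0) (𝓝 0) := by
    refine (hscaled.congr' ?_ ?_).trans_tendsto hlinear
    · filter_upwards [self_mem_nhdsWithin] with t (ht : 0 < t)
      rw [Function.comp_apply, taylorTerm_smul, smul_sub, inv_smul_smul₀ (by positivity)]
    · filter_upwards [self_mem_nhdsWithin] with t (ht : 0 < t)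
      rw [Function.comp_apply, norm_smul, Real.norm_of_nonneg ht.le, smul_eq_mul]
      rw [mul_pow, pow_succ t]
      field_simp
  simpa using hlim.add_const (taylorTerm f x₀ k y)

end VanishesToOrder

theorem eventuallyEq_zero_of_forall_taylorTerm_eq_zero [CompleteSpace Y] (hf : AnalyticAt ℝ f x₀)
    (h : ∀ k y, taylorTerm f x₀ k y = 0) : f =ᶠ[𝓝 x₀] 0 := by
  obtain ⟨p, hp, hterm⟩ := exists_hasFPowerSeriesAt_apply_eq_taylorTerm hf
  filter_upwards [hp.eventually_hasSum_sub] with y hy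
  simp only [hterm, h] at hy
  exact hy.unique hasSum_zero

theorem exists_vanishesToOrder_add_two [CompleteSpace Y] (hf : AnalyticAt ℝ f x₀)
    (hzero : f x₀ = 0) (hgrad : fderiv ℝ f x₀ = 0) (hne : ¬ f =ᶠ[𝓝 x₀] 0) :
    ∃ k y, VanishesToOrder f x₀ (k + 2) ∧ taylorTerm f x₀ (k + 2) y ≠ 0 := by
  classical
  have hex : ∃ k y, taylorTerm f x₀ k y ≠ 0 := by
    by_contra! h
    exact hne (eventuallyEq_zero_of_forall_taylorTerm_eq_zero hf h)
  obtain ⟨n, ⟨y, hy⟩, hmin⟩ : ∃ n, (∃ y, taylorTerm f x₀ n y ≠ 0) ∧ VanishesToOrder f x₀ n :=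
    ⟨Nat.find hex, Nat.find_spec hex, fun j hj ↦ by simpa using Nat.find_min hex hj⟩
  match n with
  | 0 => simp [taylorTerm, hzero] at hy
  | 1 => simp [taylorTerm, iteratedFDeriv_one_apply, hgrad] at hy
  | k + 2 => exact ⟨k, y, hmin, hy⟩

end TaylorTerms

section BlowUp

variable {E Y : Type*} [NormedAddCommGroup E] [NormedSpace ℝ E] [NormedAddCommGroup Y]
  [NormedSpace ℝ Y]

theorem fderiv_fderiv_apply {f : E → Y} {y : E} (hf : ContDiffAt ℝ 2 f y) (e : E) :
    fderiv ℝ (fun z ↦ fderiv ℝ f z e) y = fderiv ℝ (fderiv ℝ f) y e := by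
  ext p
  rw [← (hf.isSymmSndFDerivAt (by simp)) p e]
  exact congr($(((ContinuousLinearMap.apply ℝ Y e).hasFDerivAt.comp y
    ((hf.fderiv_right (m := 1) le_rfl).differentiableAt one_ne_zero).hasFDerivAt).fderiv) p)

theorem fderiv_fderiv_fderiv_apply {f : E → Y} {y : E} (hf : ContDiffAt ℝ 3 f y) (e : E) :
    fderiv ℝ (fderiv ℝ fun z ↦ fderiv ℝ f z e) y = fderiv ℝ (fderiv ℝ (fderiv ℝ f)) y e := by
  have hgrad : (fderiv ℝ fun z ↦ fderiv ℝ f z e) =ᶠ[𝓝 y] fun z ↦ fderiv ℝ (fderiv ℝ f) z e := by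
    filter_upwards [hf.eventually (by simp)] with z hz
    exact fderiv_fderiv_apply (hz.of_le (by norm_num)) e
  rw [hgrad.fderiv_eq]
  exact fderiv_fderiv_apply (hf.fderiv_right (by norm_num)) e

theorem apply_fderiv_fderiv_fderiv_apply_eq_zero {f : E → ℝ} (hf : ContDiff ℝ 3 f)
    {L : (E →L[ℝ] E →L[ℝ] ℝ) →L[ℝ] ℝ} (hL : ∀ y, L (fderiv ℝ (fderiv ℝ f) y) = 0) (e y : E) :
    L (fderiv ℝ (fderiv ℝ fun z ↦ fderiv ℝ f z e) y) = 0 := by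
  have hdiff : DifferentiableAt ℝ (fderiv ℝ (fderiv ℝ f)) y :=
    ((hf.fderiv_right (m := 2) (by norm_num)).fderiv_right (m := 1)
      (by norm_num)).contDiffAt.differentiableAt one_ne_zero
  have hcomp := L.hasFDerivAt.comp y hdiff.hasFDerivAt
  rw [show L ∘ fderiv ℝ (fderiv ℝ f) = fun _ ↦ 0 from funext hL] at hcomp
  have hzero := hcomp.unique (hasFDerivAt_const (0 : ℝ) y)
  rw [fderiv_fderiv_fderiv_apply hf.contDiffAt]
  exact congr($hzero e)

variable {f : E → ℝ} {x₀ : E} {k : ℕ}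

theorem fderiv_fderiv_taylorTerm (hf : AnalyticAt ℝ f x₀) (k : ℕ) :
    fderiv ℝ (fderiv ℝ (taylorTerm f x₀ (k + 2))) = taylorTerm (fderiv ℝ (fderiv ℝ f)) x₀ k := by
  rw [fderiv_taylorTerm hf, fderiv_taylorTerm hf.fderiv]

theorem fderiv_fderiv_taylorTerm_apply_self (hf : AnalyticAt ℝ f x₀) (k : ℕ) (y : E) :
    fderiv ℝ (fderiv ℝ (taylorTerm f x₀ (k + 2))) y y y
      = (k + 1) * ((k + 2) * taylorTerm f x₀ (k + 2) y) := by
  rw [fderiv_fderiv_taylorTerm hf, taylorTerm_fderiv_apply_self, smul_apply,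
    taylorTerm_fderiv_apply_self, smul_eq_mul, smul_eq_mul]
  push_cast
  ring

namespace VanishesToOrder

theorem tendsto_fderiv_fderiv (h : VanishesToOrder f x₀ (k + 2)) (hf : AnalyticAt ℝ f x₀) (y : E) :
    Tendsto (fun t : ℝ ↦ (t ^ k)⁻¹ • fderiv ℝ (fderiv ℝ f) (x₀ + t • y)) (𝓝[>] 0)
      (𝓝 (fderiv ℝ (fderiv ℝ (taylorTerm f x₀ (k + 2))) y)) := by
  rw [fderiv_fderiv_taylorTerm hf]
  exact ((h.fderiv hf).fderiv hf.fderiv).tendsto_taylorTerm hf.fderiv.fderiv y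

theorem apply_fderiv_fderiv_taylorTerm_eq_zero (h : VanishesToOrder f x₀ (k + 2))
    (hf : AnalyticAt ℝ f x₀) {L : E → (E →L[ℝ] E →L[ℝ] ℝ) →L[ℝ] ℝ} (hL : ContinuousAt L x₀)
    (heq : ∀ᶠ x in 𝓝 x₀, L x (fderiv ℝ (fderiv ℝ f) x) = 0) (y : E) :
    L x₀ (fderiv ℝ (fderiv ℝ (taylorTerm f x₀ (k + 2))) y) = 0 := by
  have hray := (tendsto_add_smul x₀ y).mono_left (nhdsWithin_le_nhds (s := Set.Ioi 0))
  refine tendsto_nhds_unique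
    (tendsto_clm_apply (hL.tendsto.comp hray) (h.tendsto_fderiv_fderiv hf y))
    (tendsto_const_nhds.congr' ?_)
  filter_upwards [hray.eventually heq] with t ht
  rw [Function.comp_apply, map_smul, ht, smul_zero]

theorem fderiv_taylorTerm_apply_nonpos (h : VanishesToOrder f x₀ (k + 1)) (hf : AnalyticAt ℝ f x₀)
    {e : E} (hle : ∀ᶠ x in 𝓝 x₀, fderiv ℝ f x e ≤ 0) (y : E) :
    fderiv ℝ (taylorTerm f x₀ (k + 1)) y e ≤ 0 := by
  rw [fderiv_taylorTerm hf]
  refine le_of_tendsto (tendsto_clm_apply ((h.fderiv hf).tendsto_taylorTerm hf.fderiv y)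
    tendsto_const_nhds) ?_
  have hray := (tendsto_add_smul x₀ y).mono_left (nhdsWithin_le_nhds (s := Set.Ioi 0))
  filter_upwards [hray.eventually hle, self_mem_nhdsWithin] with t ht (htpos : 0 < t)
  exact mul_nonpos_of_nonneg_of_nonpos (by positivity) ht

end VanishesToOrder

end BlowUp

theorem eq_zero_of_deriv_isBigO {Y : Type*} [NormedAddCommGroup Y] [NormedSpace ℝ Y] {F : ℝ → Y}
    (hF : AnalyticOnNhd ℝ F Set.univ) (hF0 : F 0 = 0) (hderiv : deriv F =O[𝓝 0] F) : F = 0 := by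
  obtain ⟨K, hK⟩ := hderiv.bound
  obtain ⟨δ, hδ, hball⟩ := Metric.eventually_nhds_iff.mp hK
  have hdiff (s : ℝ) : HasDerivAt F (deriv F s) s := (hF s trivial).differentiableAt.hasDerivAt
  have hIcc : ∀ s ∈ Set.Icc 0 (δ / 2), F s = 0 :=
    eq_zero_of_abs_deriv_le_mul_abs_self_of_eq_zero_right
      (fun s _ ↦ (hdiff s).continuousAt.continuousWithinAt) (fun s _ ↦ (hdiff s).hasDerivWithinAt)
      hF0 fun s hs ↦ hball (by rw [dist_zero_right, Real.norm_of_nonneg hs.1]; linarith [hs.2])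
  have hright : ∀ᶠ s in 𝓝[>] (0 : ℝ), F s = 0 := by
    filter_upwards [Ioo_mem_nhdsGT (half_pos hδ)] with s hs using hIcc s ⟨hs.1.le, hs.2.le⟩
  refine hF.eq_of_frequently_eq (z₀ := 0) (fun _ _ ↦ analyticAt_const) ?_
  exact hright.frequently.filter_mono (nhdsWithin_mono _ fun _ hs ↦ ne_of_gt hs)

section KernelLines

variable {E : Type*} [NormedAddCommGroup E] [NormedSpace ℝ E]

theorem fderiv_apply_apply_eq_zero_of_eventually_apply_eq_zero {A : E → E →L[ℝ] E →L[ℝ] ℝ}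
    {X : E → E} {x : E} (hA : DifferentiableAt ℝ A x) (hX : DifferentiableAt ℝ X x)
    (hsymm : ∀ p q, A x p q = A x q p) (hAX : ∀ᶠ y in 𝓝 x, A y (X y) = 0) (z : E) :
    fderiv ℝ A x z (X x) (X x) = 0 := by
  have hprod := hA.hasFDerivAt.clm_apply hX.hasFDerivAt
  have hzero := hprod.unique ((hasFDerivAt_const (0 : E →L[ℝ] ℝ) x).congr_of_eventuallyEq hAX)
  have hz : A x (fderiv ℝ X x z) (X x) + fderiv ℝ A x z (X x) (X x) = 0 := congr($hzero z (X x))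
  rwa [hsymm, hAX.self_of_nhds, zero_apply, zero_add] at hz

variable {f : E → ℝ} {x u w : E}

theorem fderiv_fderiv_fderiv_swap (hf : ContDiffAt ℝ 3 f x) (p q r : E) :
    fderiv ℝ (fderiv ℝ (fderiv ℝ f)) x p q r = fderiv ℝ (fderiv ℝ (fderiv ℝ f)) x q p r :=
  congr($((hf.fderiv_right (m := 2) (by norm_num)).isSymmSndFDerivAt (by simp) p q) r)

theorem fderiv_fderiv_fderiv_swap_right (hf : ContDiffAt ℝ 3 f x) (p q r : E) :
    fderiv ℝ (fderiv ℝ (fderiv ℝ f)) x p q r = fderiv ℝ (fderiv ℝ (fderiv ℝ f)) x p r q := by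
  have hp : ContDiffAt ℝ 2 (fun z ↦ fderiv ℝ f z p) x :=
    (hf.fderiv_right (by norm_num)).clm_apply contDiffAt_const
  rw [← fderiv_fderiv_fderiv_apply hf]
  exact hp.isSymmSndFDerivAt (by simp) q r

variable [FiniteDimensional ℝ E]

-- With `X = ξ - q` in the kernel of `D²f`, the form `D³f z` vanishes at `(X, X)`, so that
-- `D³f z ξ ξ = D³f z ξ ξ - D³f z X X = D³f z q (ξ + X)`.
theorem fderiv_fderiv_fderiv_apply_self (hf : AnalyticAt ℝ f x)
    (hrank : ∀ᶠ y in 𝓝 x, Module.finrank ℝ (fderiv ℝ (fderiv ℝ f) y).range ≤ 2)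
    (h : gramDet (fderiv ℝ (fderiv ℝ f) x) u w ≠ 0) (ξ : E) :
    fderiv ℝ (fderiv ℝ (fderiv ℝ f)) x ξ ξ = fderiv ℝ (fderiv ℝ (fderiv ℝ f)) x
      (planeInverse u w (fderiv ℝ (fderiv ℝ f) x) (fderiv ℝ (fderiv ℝ f) x ξ))
      (ξ + (ξ - planeInverse u w (fderiv ℝ (fderiv ℝ f) x) (fderiv ℝ (fderiv ℝ f) x ξ))) := by
  set A := fderiv ℝ (fderiv ℝ f)
  set q : E → E := fun y ↦ planeInverse u w (A y) (A y ξ)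
  have hA : DifferentiableAt ℝ A x := hf.fderiv.fderiv.differentiableAt
  have hq : DifferentiableAt ℝ q x :=
    differentiableAt_planeInverse hA (hA.clm_apply (differentiableAt_const ξ)) h
  have hker : ∀ᶠ y in 𝓝 x, A y (ξ - q y) = 0 := by
    filter_upwards [hrank, hf.eventually_analyticAt,
      (tendsto_gramDet hA.continuousAt.tendsto u w).eventually_ne h] with y hy hfy hdet
    exact apply_sub_planeInverse_eq_zero hfy.contDiffAt.isSymmSndFDerivAt_of_omega hy hdet ξ
  ext z
  have hX : fderiv ℝ A x z (ξ - q x) (ξ - q x) = 0 :=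
    fderiv_apply_apply_eq_zero_of_eventually_apply_eq_zero hA (hq.const_sub ξ)
      hf.contDiffAt.isSymmSndFDerivAt_of_omega hker z
  have hrotate (p r : E) : fderiv ℝ A x p r z = fderiv ℝ A x z p r := by
    rw [fderiv_fderiv_fderiv_swap_right hf.contDiffAt, fderiv_fderiv_fderiv_swap hf.contDiffAt]
  have hswap : fderiv ℝ A x z (q x) ξ = fderiv ℝ A x z ξ (q x) :=
    fderiv_fderiv_fderiv_swap_right hf.contDiffAt z (q x) ξ
  change fderiv ℝ A x ξ ξ z = fderiv ℝ A x (q x) (ξ + (ξ - q x)) z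
  rw [hrotate, hrotate]
  simp only [map_sub, map_add, sub_apply] at hX ⊢
  linear_combination hX - hswap

theorem fderiv_fderiv_fderiv_apply_self_isBigO (hf : AnalyticAt ℝ f x)
    (hrank : ∀ᶠ y in 𝓝 x, Module.finrank ℝ (fderiv ℝ (fderiv ℝ f) y).range ≤ 2)
    (h : gramDet (fderiv ℝ (fderiv ℝ f) x) u w ≠ 0) (ξ : E) :
    (fun y ↦ fderiv ℝ (fderiv ℝ (fderiv ℝ f)) y ξ ξ)
      =O[𝓝 x] fun y ↦ fderiv ℝ (fderiv ℝ f) y ξ := by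
  set A := fderiv ℝ (fderiv ℝ f)
  set q : E → E := fun y ↦ planeInverse u w (A y) (A y ξ)
  have hA : DifferentiableAt ℝ A x := hf.fderiv.fderiv.differentiableAt
  have hT : fderiv ℝ A =O[𝓝 x] fun _ ↦ (1 : ℝ) :=
    hf.fderiv.fderiv.fderiv.continuousAt.tendsto.isBigO_one ℝ
  have hqO : q =O[𝓝 x] fun y ↦ A y ξ := planeInverse_isBigO hA.continuousAt.tendsto h _
  have hq : ContinuousAt q x := (differentiableAt_planeInverse hA
    (hA.clm_apply (differentiableAt_const ξ)) h).continuousAt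
  have hr : (fun y ↦ ξ + (ξ - q y)) =O[𝓝 x] fun _ ↦ (1 : ℝ) :=
    (hq.tendsto.const_sub ξ |>.const_add ξ).isBigO_one ℝ
  have hbound : (fun y ↦ fderiv ℝ A y ξ ξ)
      =O[𝓝 x] fun y ↦ ‖fderiv ℝ A y‖ * ‖q y‖ * ‖ξ + (ξ - q y)‖ := by
    refine IsBigO.of_norm_eventuallyLE ?_
    filter_upwards [hrank.eventually_nhds, hf.eventually_analyticAt,
      (tendsto_gramDet hA.continuousAt.tendsto u w).eventually_ne h] with y hy hfy hdet
    rw [fderiv_fderiv_fderiv_apply_self hfy hy hdet ξ]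
    exact (fderiv ℝ A y).le_opNorm₂ _ _
  refine hbound.trans ?_
  simpa using ((hT.norm_left.mul hqO.norm_norm).mul hr.norm_left).norm_right

variable {U : Set E}

theorem fderiv_fderiv_add_smul_apply_eq_zero (hU : IsOpen U) (hf : AnalyticOnNhd ℝ f U)
    (hrank : ∀ y ∈ U, Module.finrank ℝ (fderiv ℝ (fderiv ℝ f) y).range ≤ 2) {ξ : E}
    (hline : ∀ s : ℝ, x + s • ξ ∈ U) (h : gramDet (fderiv ℝ (fderiv ℝ f) x) u w ≠ 0)
    (hker : fderiv ℝ (fderiv ℝ f) x ξ = 0) (s : ℝ) :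
    fderiv ℝ (fderiv ℝ f) (x + s • ξ) ξ = 0 := by
  have hx : x ∈ U := by simpa using hline 0
  have hanalytic : AnalyticOnNhd ℝ (fun s : ℝ ↦ fderiv ℝ (fderiv ℝ f) (x + s • ξ) ξ) Set.univ :=
    fun s _ ↦ ((ContinuousLinearMap.apply ℝ (E →L[ℝ] ℝ) ξ).analyticAt _).fun_comp
      (AnalyticAt.fun_comp (hf _ (hline s)).fderiv.fderiv (by fun_prop))
  have hderiv (s : ℝ) : deriv (fun s : ℝ ↦ fderiv ℝ (fderiv ℝ f) (x + s • ξ) ξ) s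
      = fderiv ℝ (fderiv ℝ (fderiv ℝ f)) (x + s • ξ) ξ ξ :=
    ((ContinuousLinearMap.apply ℝ (E →L[ℝ] ℝ) ξ).hasFDerivAt.comp_hasDerivAt s
      (hasDerivAt_comp_add_smul (hf _ (hline s)).fderiv.fderiv.differentiableAt)).deriv
  have hbound := (fderiv_fderiv_fderiv_apply_self_isBigO (hf x hx)
    (eventually_of_mem (hU.mem_nhds hx) hrank) h ξ).comp_tendsto (tendsto_add_smul x ξ)
  exact congr($(eq_zero_of_deriv_isBigO hanalytic (by simpa using hker)
    (hbound.congr_left fun s ↦ (hderiv s).symm)) s)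

theorem fderiv_add_smul_eq_of_apply_eq_zero (hU : IsOpen U) (hf : AnalyticOnNhd ℝ f U)
    (hrank : ∀ y ∈ U, Module.finrank ℝ (fderiv ℝ (fderiv ℝ f) y).range ≤ 2) {ξ : E}
    (hline : ∀ s : ℝ, x + s • ξ ∈ U) (h : gramDet (fderiv ℝ (fderiv ℝ f) x) u w ≠ 0)
    (hker : fderiv ℝ (fderiv ℝ f) x ξ = 0) (s : ℝ) :
    fderiv ℝ f (x + s • ξ) = fderiv ℝ f x := by
  have hderiv (s : ℝ) : HasDerivAt (fun s : ℝ ↦ fderiv ℝ f (x + s • ξ)) 0 s := by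
    rw [← fderiv_fderiv_add_smul_apply_eq_zero hU hf hrank hline h hker s]
    exact hasDerivAt_comp_add_smul (hf _ (hline s)).fderiv.differentiableAt
  simpa using
    is_const_of_deriv_eq_zero (fun s ↦ (hderiv s).differentiableAt) (fun s ↦ (hderiv s).deriv) s 0

end KernelLines

section Homogeneous

variable {E : Type*} [NormedAddCommGroup E] [NormedSpace ℝ E] {v : E → ℝ} {x : E}

theorem fderiv_smul_of_homogeneous
    (hv : ∀ t : ℝ, 0 < t → ∀ x : E, x ≠ 0 → v (t • x) = t * v x) {t : ℝ} (ht : 0 < t)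
    (hx : x ≠ 0) : fderiv ℝ v (t • x) = fderiv ℝ v x := by
  have heq : (fun y ↦ v (t • y)) =ᶠ[𝓝 x] t • v := by
    filter_upwards [eventually_ne_nhds hx] with y hy using hv t ht y hy
  have hsmul := heq.fderiv_eq (𝕜 := ℝ)
  rw [fderiv_comp_smul, fderiv_const_smul_field] at hsmul
  exact smul_right_injective _ ht.ne' hsmul

theorem fderiv_apply_self_of_homogeneous
    (hv : ∀ t : ℝ, 0 < t → ∀ x : E, x ≠ 0 → v (t • x) = t * v x) (hdiff : DifferentiableAt ℝ v x)
    (hx : x ≠ 0) : fderiv ℝ v x x = v x := by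
  have hray : HasDerivAt (fun t : ℝ ↦ v (x + t • x)) (fderiv ℝ v x x) 0 := by
    simpa using hasDerivAt_comp_add_smul (t := 0) (p := x) (by simpa using hdiff)
  have heq : (fun t : ℝ ↦ v (x + t • x)) =ᶠ[𝓝 0] fun t ↦ (1 + t) * v x := by
    filter_upwards [lt_mem_nhds (show (-1 : ℝ) < 0 by norm_num)] with t ht
    rw [← hv (1 + t) (by linarith) x hx, add_smul, one_smul]
  refine hray.unique (HasDerivAt.congr_of_eventuallyEq ?_ heq)
  simpa using ((hasDerivAt_id (0 : ℝ)).const_add 1).mul_const (v x)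

end Homogeneous

/-- `v` is a real analytic function off the origin, positively homogeneous of order one, whose
Hessian has rank at most two and is annihilated by the elliptic operator `L`. The coefficients of
the operator at `x` are encoded as a linear functional `L x` on bilinear forms. -/
structure IsLowRankSolution {E : Type*} [NormedAddCommGroup E] [NormedSpace ℝ E]
    (L : E → (E →L[ℝ] E →L[ℝ] ℝ) →L[ℝ] ℝ) (v : E → ℝ) : Prop where
  analyticOnNhd : AnalyticOnNhd ℝ v {x | x ≠ 0}
  map_smul : ∀ t : ℝ, 0 < t → ∀ x : E, x ≠ 0 → v (t • x) = t * v x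
  continuousAt : ∀ x ≠ 0, ContinuousAt L x
  isElliptic : ∀ x ≠ 0, IsElliptic (L x)
  apply_hessian : ∀ x ≠ 0, L x (fderiv ℝ (fderiv ℝ v) x) = 0
  finrank_range_le : ∀ x ≠ 0, Module.finrank ℝ (fderiv ℝ (fderiv ℝ v) x).range ≤ 2

namespace IsLowRankSolution

section Normed

variable {E : Type*} [NormedAddCommGroup E] [NormedSpace ℝ E]
  {L : E → (E →L[ℝ] E →L[ℝ] ℝ) →L[ℝ] ℝ} {v : E → ℝ} {x x₀ ξ e : E} {k : ℕ}

theorem fderiv_sub_clm (h : IsLowRankSolution L v) (ℓ : E →L[ℝ] ℝ) (hx : x ≠ 0) :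
    fderiv ℝ (fun y ↦ v y - ℓ y) x = fderiv ℝ v x - ℓ := by
  rw [fderiv_fun_sub (h.analyticOnNhd x hx).differentiableAt ℓ.differentiableAt, ℓ.fderiv]

theorem fderiv_fderiv_sub_clm (h : IsLowRankSolution L v) (ℓ : E →L[ℝ] ℝ) (hx : x ≠ 0) :
    fderiv ℝ (fderiv ℝ fun y ↦ v y - ℓ y) x = fderiv ℝ (fderiv ℝ v) x := by
  have hgrad : (fderiv ℝ fun y ↦ v y - ℓ y) =ᶠ[𝓝 x] fun y ↦ fderiv ℝ v y - ℓ := by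
    filter_upwards [eventually_ne_nhds hx] with y hy using h.fderiv_sub_clm ℓ hy
  rw [hgrad.fderiv_eq, fderiv_sub_const]

theorem sub_clm (h : IsLowRankSolution L v) (ℓ : E →L[ℝ] ℝ) :
    IsLowRankSolution L fun y ↦ v y - ℓ y where
  analyticOnNhd x hx := (h.analyticOnNhd x hx).fun_sub (ℓ.analyticAt x)
  map_smul t ht x hx := by
    rw [h.map_smul t ht x hx, ℓ.map_smul, smul_eq_mul]
    ring
  continuousAt := h.continuousAt
  isElliptic := h.isElliptic
  apply_hessian x hx := by rw [h.fderiv_fderiv_sub_clm ℓ hx, h.apply_hessian x hx]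
  finrank_range_le x hx := by
    rw [h.fderiv_fderiv_sub_clm ℓ hx]
    exact h.finrank_range_le x hx

theorem eventually_apply_hessian (h : IsLowRankSolution L v) (hx : x ≠ 0) :
    ∀ᶠ y in 𝓝 x, L y (fderiv ℝ (fderiv ℝ v) y) = 0 :=
  (eventually_ne_nhds hx).mono h.apply_hessian

theorem eq_zero_of_eventuallyEq_zero (h : IsLowRankSolution L v) (hE : 1 < Module.rank ℝ E)
    (hx₀ : x₀ ≠ 0) (hzero : v =ᶠ[𝓝 x₀] 0) (hx : x ≠ 0) : v x = 0 :=
  h.analyticOnNhd.eqOn_of_preconnected_of_eventuallyEq (fun _ _ ↦ analyticAt_const)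
    (isConnected_compl_singleton_of_one_lt_rank hE 0).isPreconnected hx₀ hzero hx

theorem exists_vanishesToOrder (h : IsLowRankSolution L v) (hx₀ : x₀ ≠ 0)
    (hgrad : fderiv ℝ v x₀ = 0) (hne : ¬ v =ᶠ[𝓝 x₀] 0) :
    ∃ k y, VanishesToOrder v x₀ (k + 2) ∧ taylorTerm v x₀ (k + 2) y ≠ 0 := by
  have hv := h.analyticOnNhd x₀ hx₀
  refine exists_vanishesToOrder_add_two hv ?_ hgrad hne
  rw [← fderiv_apply_self_of_homogeneous h.map_smul hv.differentiableAt hx₀, hgrad, zero_apply]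

theorem tendsto_fderiv_apply_base (h : IsLowRankSolution L v) (hx₀ : x₀ ≠ 0)
    (hk : VanishesToOrder v x₀ (k + 2)) (y : E) :
    Tendsto (fun t : ℝ ↦ (t ^ (k + 2))⁻¹ * fderiv ℝ v (x₀ + t • y) x₀) (𝓝[>] 0)
      (𝓝 (-((k + 1) * taylorTerm v x₀ (k + 2) y))) := by
  have hv := h.analyticOnNhd x₀ hx₀
  have hfun := hk.tendsto_taylorTerm hv y
  have hgrad := tendsto_clm_apply ((hk.fderiv hv).tendsto_taylorTerm hv.fderiv y)
    (tendsto_const_nhds (x := y))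
  have hray := (tendsto_add_smul x₀ y).mono_left (nhdsWithin_le_nhds (s := Set.Ioi 0))
  have hlim := hfun.sub hgrad
  rw [taylorTerm_fderiv_apply_self] at hlim
  convert hlim.congr' ?_ using 2
  · push_cast
    rw [smul_eq_mul]
    ring
  filter_upwards [hray.eventually_ne hx₀, self_mem_nhdsWithin] with t ht (htpos : 0 < t)
  have heuler := fderiv_apply_self_of_homogeneous h.map_smul
    (h.analyticOnNhd _ ht).differentiableAt ht
  rw [map_add, ContinuousLinearMap.map_smul, smul_eq_mul] at heuler
  rw [← heuler, smul_apply, smul_eq_mul, smul_eq_mul]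
  field_simp
  ring

theorem fderiv_eq_of_hessian_apply_eq_zero [FiniteDimensional ℝ E] (h : IsLowRankSolution L v)
    (hli : LinearIndependent ℝ ![x, ξ]) {u w : E}
    (hdet : gramDet (fderiv ℝ (fderiv ℝ v) x) u w ≠ 0) (hker : fderiv ℝ (fderiv ℝ v) x ξ = 0) :
    fderiv ℝ v ξ = fderiv ℝ v x := by
  have hline (s : ℝ) : x + s • ξ ≠ 0 := fun h0 ↦ by
    simpa using LinearIndependent.pair_iff.mp hli 1 s (by rwa [one_smul])
  have hconst (s : ℝ) : fderiv ℝ v (x + s • ξ) = fderiv ℝ v x :=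
    fderiv_add_smul_eq_of_apply_eq_zero isOpen_ne h.analyticOnNhd h.finrank_range_le hline hdet
      hker s
  have hcont : Tendsto (fun t : ℝ ↦ fderiv ℝ v (ξ + t • x)) (𝓝[>] 0) (𝓝 (fderiv ℝ v ξ)) :=
    ((h.analyticOnNhd ξ (hli.ne_zero 1)).fderiv.continuousAt.tendsto.comp
      (tendsto_add_smul ξ x)).mono_left nhdsWithin_le_nhds
  refine tendsto_nhds_unique hcont (tendsto_const_nhds.congr' ?_)
  filter_upwards [self_mem_nhdsWithin] with t (ht : 0 < t)
  have hscale : ξ + t • x = t • (x + t⁻¹ • ξ) := by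
    rw [smul_add, smul_inv_smul₀ ht.ne', add_comm]
  rw [hscale, fderiv_smul_of_homogeneous h.map_smul ht (hline _), hconst]

theorem exists_forall_fderiv_apply_le [FiniteDimensional ℝ E] (h : IsLowRankSolution L v)
    (he : e ≠ 0) : ∃ x₀ ≠ 0, ∀ x ≠ 0, fderiv ℝ v x e ≤ fderiv ℝ v x₀ e := by
  have hne {x : E} (hx : x ∈ Metric.sphere (0 : E) 1) : x ≠ 0 := ne_zero_of_mem_unit_sphere ⟨x, hx⟩
  have hnormalize {x : E} (hx : x ≠ 0) : ‖x‖⁻¹ • x ∈ Metric.sphere (0 : E) 1 := by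
    simpa using norm_smul_inv_norm (𝕜 := ℝ) hx
  have hcont : ContinuousOn (fun x ↦ fderiv ℝ v x e) (Metric.sphere 0 1) := fun x hx ↦
    ((h.analyticOnNhd x (hne hx)).fderiv.continuousAt.clm_apply
      continuousAt_const).continuousWithinAt
  obtain ⟨x₀, hx₀, hmax⟩ := (isCompact_sphere (0 : E) 1).exists_isMaxOn ⟨_, hnormalize he⟩ hcont
  refine ⟨x₀, hne hx₀, fun x hx ↦ ?_⟩
  rw [← fderiv_smul_of_homogeneous h.map_smul (inv_pos.mpr (norm_pos_iff.mpr hx)) hx]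
  exact hmax (hnormalize hx)

end Normed

section InnerProduct

variable {E : Type*} [NormedAddCommGroup E] [InnerProductSpace ℝ E] [FiniteDimensional ℝ E]
  {L : E → (E →L[ℝ] E →L[ℝ] ℝ) →L[ℝ] ℝ} {v : E → ℝ} {x₀ e : E} {k : ℕ}

theorem eventuallyEq_zero_of_fderiv_apply_smul_self_nonpos (h : IsLowRankSolution L v)
    (hx₀ : x₀ ≠ 0) (hgrad : fderiv ℝ v x₀ = 0) {s : ℝ} (hs : s ≠ 0)
    (hle : ∀ᶠ x in 𝓝 x₀, fderiv ℝ v x (s • x₀) ≤ 0) : v =ᶠ[𝓝 x₀] 0 := by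
  have hv := h.analyticOnNhd x₀ hx₀
  by_contra hne
  obtain ⟨k, y, hk, hy⟩ := h.exists_vanishesToOrder hx₀ hgrad hne
  have hnonneg (y : E) : 0 ≤ s * taylorTerm v x₀ (k + 2) y := by
    have hlim := (h.tendsto_fderiv_apply_base hx₀ hk y).const_mul s
    have hray := (tendsto_add_smul x₀ y).mono_left (nhdsWithin_le_nhds (s := Set.Ioi 0))
    have hnonpos : s * -((k + 1) * taylorTerm v x₀ (k + 2) y) ≤ 0 := by
      refine le_of_tendsto hlim ?_
      filter_upwards [hray.eventually hle, self_mem_nhdsWithin] with t ht (htpos : 0 < t)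
      rw [mul_left_comm, ← smul_eq_mul s, ← ContinuousLinearMap.map_smul]
      exact mul_nonpos_of_nonneg_of_nonpos (by positivity) ht
    have : 0 ≤ (k + 1 : ℝ) * (s * taylorTerm v x₀ (k + 2) y) := by linarith
    exact nonneg_of_mul_nonneg_right this (by positivity)
  refine hy ((h.isElliptic x₀ hx₀).eq_zero_of_mul_nonneg (contDiff_taylorTerm v x₀ _)
    (hk.apply_fderiv_fderiv_taylorTerm_eq_zero hv (h.continuousAt x₀ hx₀)
      (h.eventually_apply_hessian hx₀)) (x₀ := 0) ?_ hs hnonneg y)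
  simpa using taylorTerm_smul v x₀ (k + 2) 0 0

theorem fderiv_taylorTerm_apply_eq_zero (h : IsLowRankSolution L v) (hx₀ : x₀ ≠ 0)
    (hk : VanishesToOrder v x₀ (k + 2)) (hle : ∀ᶠ x in 𝓝 x₀, fderiv ℝ v x e ≤ 0) (y : E) :
    fderiv ℝ (taylorTerm v x₀ (k + 2)) y e = 0 := by
  have hv := h.analyticOnNhd x₀ hx₀
  have hsmooth : ContDiff ℝ 2 fun y ↦ fderiv ℝ (taylorTerm v x₀ (k + 2)) y e :=
    ((contDiff_taylorTerm v x₀ (k + 2) (n := 3)).fderiv_right (by norm_num)).clm_apply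
      contDiff_const
  have hharmonic := hk.apply_fderiv_fderiv_taylorTerm_eq_zero hv (h.continuousAt x₀ hx₀)
    (h.eventually_apply_hessian hx₀)
  refine (h.isElliptic x₀ hx₀).eq_zero_of_mul_nonneg hsmooth
    (apply_fderiv_fderiv_fderiv_apply_eq_zero (contDiff_taylorTerm v x₀ _) hharmonic e)
    (x₀ := 0) ?_ (neg_ne_zero.mpr one_ne_zero) (fun z ↦ ?_) y
  · rw [fderiv_taylorTerm hv]
    have := taylorTerm_smul (fderiv ℝ v) x₀ (k + 1) 0 0
    simpa using congr($this e)
  · linarith [hk.fderiv_taylorTerm_apply_nonpos hv hle z]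

-- Along the ray from `x₀` in the direction `η`, the rescaled `D²v` converges to the Hessian of the
-- Taylor term at `η`, so its kernel contains a vector close to `e`, on which `∇v` takes the value
-- it has on the ray.
theorem fderiv_eq_of_hessian_taylorTerm_apply_eq_zero (h : IsLowRankSolution L v)
    (hli : LinearIndependent ℝ ![x₀, e]) (hk : VanishesToOrder v x₀ (k + 2)) {η : E}
    (hne : fderiv ℝ (fderiv ℝ (taylorTerm v x₀ (k + 2))) η ≠ 0)
    (he : fderiv ℝ (fderiv ℝ (taylorTerm v x₀ (k + 2))) η e = 0) :
    fderiv ℝ v e = fderiv ℝ v x₀ := by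
  have hx₀ : x₀ ≠ 0 := hli.ne_zero 0
  have hv := h.analyticOnNhd x₀ hx₀
  obtain ⟨u, w, hdet⟩ := (h.isElliptic x₀ hx₀).exists_gramDet_ne_zero
    ((contDiff_taylorTerm v x₀ (k + 2)).contDiffAt.isSymmSndFDerivAt_of_omega)
    (hk.apply_fderiv_fderiv_taylorTerm_eq_zero hv (h.continuousAt x₀ hx₀)
      (h.eventually_apply_hessian hx₀) η) hne
  have hray := (tendsto_add_smul x₀ η).mono_left (nhdsWithin_le_nhds (s := Set.Ioi 0))
  have hhess := hk.tendsto_fderiv_fderiv hv η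
  set A : ℝ → E →L[ℝ] E →L[ℝ] ℝ := fun t ↦ fderiv ℝ (fderiv ℝ v) (x₀ + t • η)
  have hker : Tendsto (fun t ↦ e - planeInverse u w (A t) (A t e)) (𝓝[>] 0) (𝓝 e) := by
    refine tendsto_sub_planeInverse ?_ hhess hdet he
    filter_upwards [self_mem_nhdsWithin] with t (ht : 0 < t) using by positivity
  have hli_near : ∀ᶠ t in 𝓝[>] (0 : ℝ),
      LinearIndependent ℝ ![x₀ + t • η, e - planeInverse u w (A t) (A t e)] := by
    have hpair : Tendsto (fun t ↦ ![x₀ + t • η, e - planeInverse u w (A t) (A t e)]) (𝓝[>] 0)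
        (𝓝 ![x₀, e]) := by
      rw [tendsto_pi_nhds, Fin.forall_fin_two]
      exact ⟨hray, hker⟩
    exact hpair.eventually (isOpen_setOfPred_linearIndependent.mem_nhds hli)
  have hgrad_ker := (h.analyticOnNhd e (hli.ne_zero 1)).fderiv.continuousAt.tendsto.comp hker
  have hgrad_ray := hv.fderiv.continuousAt.tendsto.comp hray
  refine tendsto_nhds_unique (hgrad_ker.congr' ?_) hgrad_ray
  filter_upwards [hli_near, hray.eventually_ne hx₀, eventually_gramDet_ne_zero hhess hdet]
    with t hli_t ht hdet_t
  have hsymm := (h.analyticOnNhd _ ht).contDiffAt.isSymmSndFDerivAt_of_omega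
  exact h.fderiv_eq_of_hessian_apply_eq_zero hli_t hdet_t
    (apply_sub_planeInverse_eq_zero hsymm (h.finrank_range_le _ ht) hdet_t e)

theorem fderiv_eq_zero_of_fderiv_apply_nonpos (h : IsLowRankSolution L v)
    (hli : LinearIndependent ℝ ![x₀, e]) (hgrad : fderiv ℝ v x₀ = 0)
    (hle : ∀ᶠ x in 𝓝 x₀, fderiv ℝ v x e ≤ 0) (hne : ¬ v =ᶠ[𝓝 x₀] 0) : fderiv ℝ v e = 0 := by
  have hx₀ : x₀ ≠ 0 := hli.ne_zero 0
  have hv := h.analyticOnNhd x₀ hx₀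
  obtain ⟨k, η, hk, hη⟩ := h.exists_vanishesToOrder hx₀ hgrad hne
  rw [← hgrad]
  refine h.fderiv_eq_of_hessian_taylorTerm_apply_eq_zero hli hk (η := η) (fun h0 ↦ ?_) ?_
  · have hself := fderiv_fderiv_taylorTerm_apply_self hv k η
    rw [h0, zero_apply, zero_apply] at hself
    exact mul_ne_zero (by positivity) (mul_ne_zero (by positivity) hη) hself.symm
  · rw [← fderiv_fderiv_apply (contDiff_taylorTerm v x₀ _).contDiffAt,
      funext (h.fderiv_taylorTerm_apply_eq_zero hx₀ hk hle), fderiv_fun_const, Pi.zero_apply]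

theorem eq_zero_of_fderiv_apply_nonpos (h : IsLowRankSolution L v) (hE : 1 < Module.rank ℝ E)
    (hx₀ : x₀ ≠ 0) (hgrad : fderiv ℝ v x₀ = 0) (he : e ≠ 0)
    (hle : ∀ x ≠ 0, fderiv ℝ v x e ≤ 0) {x : E} (hx : x ≠ 0) : v x = 0 := by
  have hle_near {y : E} (hy : y ≠ 0) : ∀ᶠ x in 𝓝 y, fderiv ℝ v x e ≤ 0 :=
    (eventually_ne_nhds hy).mono hle
  by_cases hli : LinearIndependent ℝ ![x₀, e]
  · by_cases hzero : v =ᶠ[𝓝 x₀] 0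
    · exact h.eq_zero_of_eventuallyEq_zero hE hx₀ hzero hx
    have hgrad_e := h.fderiv_eq_zero_of_fderiv_apply_nonpos hli hgrad (hle_near hx₀) hzero
    exact h.eq_zero_of_eventuallyEq_zero hE he (h.eventuallyEq_zero_of_fderiv_apply_smul_self_nonpos
      he hgrad_e one_ne_zero (by simpa only [one_smul] using hle_near he)) hx
  · obtain ⟨s, rfl⟩ : ∃ s : ℝ, s • x₀ = e := by
      simpa [LinearIndependent.pair_iff' hx₀] using hli
    exact h.eq_zero_of_eventuallyEq_zero hE hx₀
      (h.eventuallyEq_zero_of_fderiv_apply_smul_self_nonpos hx₀ hgrad (left_ne_zero_of_smul he)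
        (hle_near hx₀)) hx

end InnerProduct

end IsLowRankSolution

theorem homogeneous_order_one_low_rank_hessian_is_linear_general {E : Type*}
    [NormedAddCommGroup E] [InnerProductSpace ℝ E] [FiniteDimensional ℝ E]
    (hE : 1 < Module.rank ℝ E) {L : E → (E →L[ℝ] E →L[ℝ] ℝ) →L[ℝ] ℝ} {v : E → ℝ}
    (h : IsLowRankSolution L v) : ∃ ℓ : E →L[ℝ] ℝ, ∀ x ≠ 0, v x = ℓ x := by
  obtain ⟨e, he⟩ := (rank_pos_iff_exists_ne_zero (R := ℝ) (M := E)).mp (zero_lt_one.trans hE)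
  obtain ⟨x₀, hx₀, hmax⟩ := h.exists_forall_fderiv_apply_le he
  refine ⟨fderiv ℝ v x₀, fun x hx ↦ sub_eq_zero.mp ?_⟩
  refine (h.sub_clm (fderiv ℝ v x₀)).eq_zero_of_fderiv_apply_nonpos hE hx₀ ?_ he (fun y hy ↦ ?_) hx
  · rw [h.fderiv_sub_clm _ hx₀, sub_self]
  · rw [h.fderiv_sub_clm _ hy, sub_apply]
    exact sub_nonpos.mpr (hmax y hy)

theorem rank_apply_basis_eq_finrank_range {ι E : Type*} [Fintype ι] [NormedAddCommGroup E]
    [NormedSpace ℝ E] (b : Module.Basis ι ℝ E) (B : E →L[ℝ] E →L[ℝ] ℝ) :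
    (Matrix.of fun i j ↦ B (b i) (b j)).rank = Module.finrank ℝ B.range := by
  let evalBasis : (E →L[ℝ] ℝ) →ₗ[ℝ] ι → ℝ := LinearMap.pi fun j ↦
    (ContinuousLinearMap.apply ℝ ℝ (b j)).toLinearMap
  have hinj : Function.Injective evalBasis := fun φ ψ hφψ ↦
    ContinuousLinearMap.coe_injective (b.ext fun j ↦ congrFun hφψ j)
  have hrow : (Matrix.of fun i j ↦ B (b i) (b j)).row = (evalBasis ∘ₗ B.toLinearMap) ∘ b := rfl
  rw [Matrix.rank_eq_finrank_span_row, hrow, Set.range_comp, Submodule.span_image, b.span_eq,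
    Submodule.map_top, LinearMap.range_comp]
  exact (Submodule.equivMapOfInjective evalBasis hinj _).symm.finrank_eq

section Coordinates

variable {ι : Type*} [Fintype ι] [DecidableEq ι]

/-- The linear functional on bilinear forms `B ↦ ∑ i, ∑ j, A i j * B (e i) (e j)` with coefficient
matrix `A`, where `e` is the standard basis. Applied to `D²v` it is the second-order operator with
coefficients `A`. -/
noncomputable def coefficientFunctional (A : ι → ι → ℝ) :
    (EuclideanSpace ℝ ι →L[ℝ] EuclideanSpace ℝ ι →L[ℝ] ℝ) →L[ℝ] ℝ :=
  ∑ i, ∑ j, A i j • (ContinuousLinearMap.apply ℝ ℝ (EuclideanSpace.single j 1)).comp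
    (ContinuousLinearMap.apply ℝ (EuclideanSpace ℝ ι →L[ℝ] ℝ) (EuclideanSpace.single i 1))

theorem coefficientFunctional_apply (A : ι → ι → ℝ)
    (B : EuclideanSpace ℝ ι →L[ℝ] EuclideanSpace ℝ ι →L[ℝ] ℝ) :
    coefficientFunctional A B =
      ∑ i, ∑ j, A i j * B (EuclideanSpace.single i 1) (EuclideanSpace.single j 1) := by
  simp [coefficientFunctional]

theorem isElliptic_coefficientFunctional {A : ι → ι → ℝ}
    (hA : ∀ ξ : EuclideanSpace ℝ ι, ξ ≠ 0 → 0 < ∑ i, ∑ j, A i j * ξ i * ξ j) :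
    IsElliptic (coefficientFunctional A) := by
  intro φ hφ
  obtain ⟨ξ, rfl⟩ := (InnerProductSpace.toDual ℝ (EuclideanSpace ℝ ι)).surjective φ
  simpa [coefficientFunctional_apply, mul_assoc, EuclideanSpace.inner_single_right] using
    hA ξ (by rintro rfl; simp at hφ)

theorem continuousAt_coefficientFunctional {X : Type*} [TopologicalSpace X]
    {a : ι → ι → X → ℝ} {x : X} (ha : ∀ i j, ContinuousAt (a i j) x) :
    ContinuousAt (fun y ↦ coefficientFunctional fun i j ↦ a i j y) x := by
  unfold coefficientFunctional
  fun_prop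

end Coordinates

/-- Lemma 2: let `v` be real analytic and positively 1-homogeneous on `ℝ⁴ ∖ {0}`,
solving a linear uniformly elliptic equation `Σ aᵢⱼ(x/|x|) ∂²v/∂xᵢ∂xⱼ = 0` with
coefficients smooth away from the origin. If the Hessian of `v` has rank at most `2`
at every point of `ℝ⁴ ∖ {0}`, then `v` is linear. -/
theorem homogeneous_order_one_low_rank_hessian_is_linear
    (v : EuclideanSpace ℝ (Fin 4) → ℝ)
    (h_an : AnalyticOnNhd ℝ v {x | x ≠ 0})
    (h_hom : ∀ t : ℝ, 0 < t → ∀ x : EuclideanSpace ℝ (Fin 4), x ≠ 0 →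
      v (t • x) = t * v x)
    (a : Fin 4 → Fin 4 → EuclideanSpace ℝ (Fin 4) → ℝ)
    (h_sm : ∀ i j, ContDiffOn ℝ (⊤ : ℕ∞) (a i j) {x | x ≠ 0})
    (C : ℝ) (hC : 1 ≤ C)
    (h_ell : ∀ θ : EuclideanSpace ℝ (Fin 4), ‖θ‖ = 1 →
      ∀ ξ : EuclideanSpace ℝ (Fin 4),
        (1 / C) * ‖ξ‖ ^ 2 ≤ ∑ i, ∑ j, a i j θ * ξ i * ξ j ∧
        ∑ i, ∑ j, a i j θ * ξ i * ξ j ≤ C * ‖ξ‖ ^ 2)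
    (h_eq : ∀ x : EuclideanSpace ℝ (Fin 4), x ≠ 0 →
      ∑ i, ∑ j, a i j (‖x‖⁻¹ • x) *
        iteratedFDeriv ℝ 2 v x ![EuclideanSpace.single i 1, EuclideanSpace.single j 1] = 0)
    (h_rank : ∀ x : EuclideanSpace ℝ (Fin 4), x ≠ 0 →
      Matrix.rank (Matrix.of fun i j =>
        iteratedFDeriv ℝ 2 v x ![EuclideanSpace.single i 1, EuclideanSpace.single j 1]) ≤ 2) :
    ∃ ℓ : EuclideanSpace ℝ (Fin 4) →ₗ[ℝ] ℝ,
      ∀ x : EuclideanSpace ℝ (Fin 4), x ≠ 0 → v x = ℓ x := by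
  have hrank : 1 < Module.rank ℝ (EuclideanSpace ℝ (Fin 4)) := by
    rw [← Module.finrank_eq_rank]
    simp
  have hessian_entry (x : EuclideanSpace ℝ (Fin 4)) (i j : Fin 4) :
      iteratedFDeriv ℝ 2 v x ![EuclideanSpace.single i 1, EuclideanSpace.single j 1] =
        fderiv ℝ (fderiv ℝ v) x (EuclideanSpace.single i 1) (EuclideanSpace.single j 1) :=
    iteratedFDeriv_two_apply v x _
  simp only [hessian_entry] at h_eq h_rank
  have hsol : IsLowRankSolution
      (fun x ↦ coefficientFunctional fun i j ↦ a i j (‖x‖⁻¹ • x)) v :=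
    { analyticOnNhd := h_an
      map_smul := h_hom
      continuousAt := fun x hx ↦ continuousAt_coefficientFunctional fun i j ↦
        ((h_sm i j).continuousOn.continuousAt (isOpen_ne.mem_nhds (by simpa using hx))).comp'
          ((continuousAt_id.norm.inv₀ (by simpa using hx)).smul continuousAt_id)
      isElliptic := fun x hx ↦ isElliptic_coefficientFunctional fun ξ hξ ↦
        lt_of_lt_of_le (by positivity) (h_ell _ (norm_smul_inv_norm (𝕜 := ℝ) hx) ξ).1
      apply_hessian := fun x hx ↦ (coefficientFunctional_apply _ _).trans (h_eq x hx)
      finrank_range_le := fun x hx ↦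
        (rank_apply_basis_eq_finrank_range (EuclideanSpace.basisFun (Fin 4) ℝ).toBasis _).ge.trans
          (by simpa using h_rank x hx) }
  obtain ⟨ℓ, hℓ⟩ := homogeneous_order_one_low_rank_hessian_is_linear_general hrank hsol
  exact ⟨ℓ, hℓ⟩
end

section
/- Let Q(x,y,z) ∈ ℝ[x,y,z] be a cubic form such that for every e ∈ S² the quadratic form Q_e = ∂_e Q is degenerate (its 3×3 symmetric matrix is singular). Then Q is a function of two variables in some linear coordinate system; equivalently, there exists a nonzero vector w ∈ ℝ³ with ∂_w Q ≡ 0. -/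
open MvPolynomial

/-- Directional derivative `∂ₑQ` of a polynomial `Q` in direction `e`. -/
noncomputable def dirDeriv (e : Fin 3 → ℝ) (Q : MvPolynomial (Fin 3) ℝ) :
    MvPolynomial (Fin 3) ℝ :=
  ∑ i, MvPolynomial.C (e i) * MvPolynomial.pderiv i Q

/-- Determinant of the 3×3 Hessian matrix (of second partial derivatives) of a
polynomial `R`; for a quadratic form `R` this vanishes iff its associated symmetric
matrix is singular. -/
noncomputable def hessDet (R : MvPolynomial (Fin 3) ℝ) : ℝ :=
  Matrix.det (Matrix.of fun i j =>
    MvPolynomial.eval (0 : Fin 3 → ℝ) (MvPolynomial.pderiv i (MvPolynomial.pderiv j R)))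

/-!
The third derivative of `Q` is a symmetric trilinear form `T` with `T(e)` the matrix of `∂ₑQ`, so
we look for `w ≠ 0` with `T(w) = 0`. If `T ≠ 0`, polarization gives `p` with `T(p, p, p) ≠ 0`, and
the space splits as `⟨p⟩ ⊕ W` with `W` the kernel of `T(p, p, ·)`.

* If `T(p)` vanishes on `W`, then a kernel vector of `T(p + e)` with `e ∈ W` lies in `W`, so `T`
  restricted to the plane `W` is again everywhere degenerate, and its solution is one for `T`. On a
  plane with `T(q, q, q) ≠ 0`, degeneracy of `T(q + v)` at a kernel vector `v` of `T(q)` yields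
  `T(v) = 0`.
* Otherwise `T(p, u) ≠ 0` for some `u ∈ W`. With `v` a kernel vector of `T(p)`, the triple `p, u, v`
  is a basis, and degeneracy of `T(u)`, `T(u + v)` and `T(p + u)` yields `T(v) = 0`.
-/

section LinearAlgebra

lemma linearIndependent_pair_of_map_eq_zero {R V M : Type*} [CommRing R] [IsDomain R]
    [AddCommGroup V] [Module R V] [Module.IsTorsionFree R V] [AddCommGroup M] [Module R M]
    [Module.IsTorsionFree R M] (f : V →ₗ[R] M) {q v : V} (hq : f q ≠ 0) (hfv : f v = 0)
    (hv : v ≠ 0) : LinearIndependent R ![q, v] := by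
  refine LinearIndependent.pair_iff.mpr fun s t h => ?_
  have hs : s = 0 := by simpa [hfv, hq] using congrArg f h
  exact ⟨hs, by simpa [hs, hv] using h⟩

variable {K V : Type*} [Field K] [AddCommGroup V] [Module K V]

lemma exists_smul_add_ker_eq (f : Module.Dual K V) {p : V} (hp : f p ≠ 0) (x : V) :
    ∃ α : K, ∃ y : LinearMap.ker f, α • p + (y : V) = x := by
  obtain ⟨_, hc, y, hy, rfl⟩ := Submodule.mem_sup.mp
    ((f.span_singleton_sup_ker_eq_top hp).ge (Submodule.mem_top (x := x)))
  obtain ⟨α, rfl⟩ := Submodule.mem_span_singleton.mp hc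
  exact ⟨α, ⟨y, hy⟩, rfl⟩

lemma not_nondegenerate_iff_exists_ne_zero [FiniteDimensional K V]
    {B : LinearMap.BilinForm K V} : ¬ B.Nondegenerate ↔ ∃ v ≠ 0, B v = 0 := by
  rw [LinearMap.BilinForm.nondegenerate_iff_ker_eq_bot, ← ne_eq, Submodule.ne_bot_iff]
  simp only [LinearMap.mem_ker, and_comm]

end LinearAlgebra

/-- Trilinear forms in curried form, so that `T e` is the bilinear form obtained from `T` by
fixing its first argument. -/
abbrev TrilinForm (R V : Type*) [CommRing R] [AddCommGroup V] [Module R V] :=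
  V →ₗ[R] LinearMap.BilinForm R V

namespace TrilinForm

section CommRing

variable {R V : Type*} [CommRing R] [AddCommGroup V] [Module R V] {T : TrilinForm R V}

/-- Symmetry of a trilinear form, encoded as invariance under the two adjacent transpositions of
the arguments. -/
structure IsSymm (T : TrilinForm R V) : Prop where
  swap_left : ∀ x y, T x y = T y x
  swap_right : ∀ x y z, T x y z = T x z y

/-- Restriction of a trilinear form to a submodule, in all three arguments. -/
def restrict (T : TrilinForm R V) (W : Submodule R V) : TrilinForm R W where
  toFun e := (T e).restrict W
  map_add' _ _ := by ext; simp
  map_smul' _ _ := by ext; simp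

@[simp]
lemma restrict_apply (T : TrilinForm R V) (W : Submodule R V) (x y z : W) :
    T.restrict W x y z = T x y z :=
  rfl

namespace IsSymm

lemma restrict (hS : T.IsSymm) (W : Submodule R V) : (T.restrict W).IsSymm where
  swap_left x y := by
    ext z
    simp [hS.swap_left (x : V) y]
  swap_right x y z := hS.swap_right x y z

lemma polarization (hS : T.IsSymm) (x y z : V) :
    6 * T x y z = T (x + y + z) (x + y + z) (x + y + z) - T (x + y) (x + y) (x + y)
      - T (x + z) (x + z) (x + z) - T (y + z) (y + z) (y + z)
      + T x x x + T y y y + T z z z := by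
  simp only [map_add, LinearMap.add_apply]
  grind [hS.swap_left, hS.swap_right]

lemma exists_apply_self_ne_zero [IsDomain R] (hS : T.IsSymm) (h6 : (6 : R) ≠ 0) (hT : T ≠ 0) :
    ∃ p, T p p p ≠ 0 := by
  contrapose! hT
  ext x y z
  have h : 6 * T x y z = 0 := by simpa only [hT, sub_zero, add_zero] using hS.polarization x y z
  exact (mul_eq_zero.mp h).resolve_left h6

end IsSymm

end CommRing

section Field

variable {K V : Type*} [Field K] [AddCommGroup V] [Module K V] {T : TrilinForm K V}

theorem IsSymm.exists_apply_eq_zero_of_finrank_eq_two (hS : T.IsSymm) (h6 : (6 : K) ≠ 0)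
    (hV : Module.finrank K V = 2) (hT : ∀ e, ¬ (T e).Nondegenerate) : ∃ w ≠ 0, T w = 0 := by
  have : FiniteDimensional K V := .of_finrank_pos (by lia)
  simp only [not_nondegenerate_iff_exists_ne_zero] at hT
  rcases eq_or_ne T 0 with rfl | hT0
  · obtain ⟨w, hw, -⟩ := hT 0
    exact ⟨w, hw, rfl⟩
  obtain ⟨q, hq⟩ := hS.exists_apply_self_ne_zero h6 hT0
  have hqq : T q q ≠ 0 := fun h => hq (by simp [h])
  obtain ⟨v, hv, hqv⟩ := hT q
  have hvq : T v q = 0 := by rw [hS.swap_left, hqv]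
  have hvvq : T v v q = 0 := by simp [hS.swap_right v v q, hvq]
  have hspan (x : V) : ∃ α β : K, α • q + β • v = x := by
    have hli := linearIndependent_pair_of_map_eq_zero (T q) hqq hqv hv
    have htop := hli.span_eq_top_of_card_eq_finrank' (by simp [hV])
    rw [Matrix.range_cons_cons_empty] at htop
    exact Submodule.mem_span_pair.mp (htop ▸ Submodule.mem_top)
  have hvvv : T v v v = 0 := by
    obtain ⟨k, hk, hTk⟩ := hT (q + v)
    obtain ⟨α, β, rfl⟩ := hspan k
    have hα : α = 0 := by simpa [hqv, hvq, hq, hvvq] using congr($hTk q)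
    have hβ : β ≠ 0 := by
      rintro rfl
      simp [hα] at hk
    simpa [hα, hβ, hqv] using congr($hTk v)
  refine ⟨v, hv, ?_⟩
  ext x y
  obtain ⟨α, β, rfl⟩ := hspan x
  obtain ⟨γ, δ, rfl⟩ := hspan y
  simp [hvq, hvvv, hvvq]

section Splitting

variable {p : V}

lemma IsSymm.not_nondegenerate_restrict_ker [FiniteDimensional K V] (hS : T.IsSymm)
    (hp : T p p p ≠ 0) (hpW : ∀ u, T p p u = 0 → T p u = 0) (e : LinearMap.ker (T p p))
    (he : ¬ (T (p + e)).Nondegenerate) :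
    ¬ (T.restrict (LinearMap.ker (T p p)) e).Nondegenerate := by
  obtain ⟨k, hk, hTk⟩ := not_nondegenerate_iff_exists_ne_zero.mp he
  obtain ⟨α, w, rfl⟩ := exists_smul_add_ker_eq (T p p) hp k
  have hep : T e p = 0 := by rw [hS.swap_left, hpW e e.2]
  have hpw : T p w = 0 := hpW w w.2
  have hewp : T e w p = 0 := by rw [hS.swap_right, hep, LinearMap.zero_apply]
  have hα : α = 0 := by simpa [hp, hep, hpw, hewp] using congr($hTk p)
  refine not_nondegenerate_iff_exists_ne_zero.mpr ⟨w, by simpa [hα] using hk, ?_⟩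
  ext y
  simpa [hα, hpw] using congr($hTk y)

lemma IsSymm.apply_eq_zero_of_restrict_ker (hS : T.IsSymm) (hp : T p p p ≠ 0)
    (hpW : ∀ u, T p p u = 0 → T p u = 0) {w : LinearMap.ker (T p p)}
    (hw : T.restrict (LinearMap.ker (T p p)) w = 0) : T w = 0 := by
  have hwp : T w p = 0 := by rw [hS.swap_left, hpW w w.2]
  ext x y
  obtain ⟨α, x, rfl⟩ := exists_smul_add_ker_eq (T p p) hp x
  obtain ⟨β, y, rfl⟩ := exists_smul_add_ker_eq (T p p) hp y
  have hxy : T w x y = 0 := congr($hw x y)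
  simp [hwp, hxy, hS.swap_right w x p]

end Splitting

/-- A triple in which `v` spans the kernel of `T p` and `u` is orthogonal to `p` for `T p`. In
dimension three it is a basis (`AdaptedFrame.exists_smul_add_eq`), in which the matrix of `T p` is
`diag(T p p p, T p u u, 0)` with nonzero first two entries. -/
structure AdaptedFrame (T : TrilinForm K V) (p u v : V) : Prop where
  ppp_ne_zero : T p p p ≠ 0
  pv_eq_zero : T p v = 0
  v_ne_zero : v ≠ 0
  ppu_eq_zero : T p p u = 0
  pu_ne_zero : T p u ≠ 0

namespace AdaptedFrame

variable {p u v : V}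

lemma add_right (hF : T.AdaptedFrame p u v) (hS : T.IsSymm) : T.AdaptedFrame p (u + v) v where
  __ := hF
  ppu_eq_zero := by simp [hF.ppu_eq_zero, hS.swap_right p p v, hF.pv_eq_zero]
  pu_ne_zero := by simpa [hF.pv_eq_zero] using hF.pu_ne_zero

lemma linearIndependent (hF : T.AdaptedFrame p u v) (hS : T.IsSymm) :
    LinearIndependent K ![p, u, v] := by
  obtain ⟨hp, hpv, hv, hppu, hpu⟩ := hF
  have hpup : T p u p = 0 := by rw [hS.swap_right, hppu]
  refine Fintype.linearIndependent_iff.mpr fun g hg => ?_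
  simp only [Fin.sum_univ_three, Matrix.cons_val] at hg
  have h0 : g 0 = 0 := by simpa [hpv, hp, hpup] using congr(T p $hg p)
  have h1 : g 1 = 0 := by simpa [h0, hpv, hpu] using congr(T p $hg)
  have h2 : g 2 = 0 := by simpa [h0, h1, hv] using hg
  simp [Fin.forall_fin_succ, h0, h1, h2]

lemma exists_smul_add_eq (hF : T.AdaptedFrame p u v) (hS : T.IsSymm)
    (hV : Module.finrank K V = 3) (x : V) : ∃ α β γ : K, α • p + β • u + γ • v = x := by
  have : FiniteDimensional K V := .of_finrank_pos (by lia)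
  have htop := (hF.linearIndependent hS).span_eq_top_of_card_eq_finrank' (by simp [hV])
  simp only [Matrix.range_cons, Matrix.range_empty, Set.union_empty, Set.singleton_union] at htop
  exact Submodule.mem_span_triple.mp (htop ▸ Submodule.mem_top)

lemma puu_ne_zero (hF : T.AdaptedFrame p u v) (hS : T.IsSymm) (hV : Module.finrank K V = 3) :
    T p u u ≠ 0 := by
  intro hpuu
  apply hF.pu_ne_zero
  ext x
  obtain ⟨α, β, γ, rfl⟩ := hF.exists_smul_add_eq hS hV x
  simp [hpuu, hS.swap_right p u v, hS.swap_right p u p, hF.pv_eq_zero, hF.ppu_eq_zero]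

lemma upp_eq_zero (hF : T.AdaptedFrame p u v) (hS : T.IsSymm) : T u p p = 0 := by
  rw [hS.swap_left, hS.swap_right, hF.ppu_eq_zero]

lemma upv_eq_zero (hF : T.AdaptedFrame p u v) (hS : T.IsSymm) : T u p v = 0 := by
  rw [hS.swap_left, hS.swap_right, hF.pv_eq_zero, LinearMap.zero_apply]

lemma uvp_eq_zero (hF : T.AdaptedFrame p u v) (hS : T.IsSymm) : T u v p = 0 := by
  rw [hS.swap_right, hF.upv_eq_zero hS]

lemma uvv_eq_zero (hF : T.AdaptedFrame p u v) (hS : T.IsSymm) (hV : Module.finrank K V = 3)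
    (hu : ¬ (T u).Nondegenerate) : T u v v = 0 := by
  have : FiniteDimensional K V := .of_finrank_pos (by lia)
  obtain ⟨k, hk, huk⟩ := not_nondegenerate_iff_exists_ne_zero.mp hu
  obtain ⟨α, β, γ, rfl⟩ := hF.exists_smul_add_eq hS hV k
  have hpuu := hF.puu_ne_zero hS hV
  have hupu : T u p u = T p u u := by rw [hS.swap_left]
  have huup : T u u p = T p u u := by rw [hS.swap_right, hupu]
  have hβ : β = 0 := by
    simpa [hF.upp_eq_zero hS, hF.uvp_eq_zero hS, huup, hpuu] using congr($huk p)
  have hγ : γ ≠ 0 := by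
    rintro rfl
    have hα : α = 0 := by simpa [hβ, hupu, hpuu] using congr($huk u)
    simp [hα, hβ] at hk
  simpa [hβ, hγ, hF.upv_eq_zero hS] using congr($huk v)

lemma uuv_eq_zero (hF : T.AdaptedFrame p u v) (hS : T.IsSymm) (hV : Module.finrank K V = 3)
    (huvv : T u v v = 0) (hpu : ¬ (T (p + u)).Nondegenerate) : T u u v = 0 := by
  have : FiniteDimensional K V := .of_finrank_pos (by lia)
  obtain ⟨k, hk, hTk⟩ := not_nondegenerate_iff_exists_ne_zero.mp hpu
  obtain ⟨α, β, γ, rfl⟩ := hF.exists_smul_add_eq hS hV k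
  have hpv := hF.pv_eq_zero
  have hppv : T p p v = 0 := by rw [hS.swap_right, hpv, LinearMap.zero_apply]
  have hpuv : T p u v = 0 := by rw [hS.swap_right, hpv, LinearMap.zero_apply]
  by_contra huuv
  have hβ : β = 0 := by
    simpa [hpv, hppv, hpuv, hF.upv_eq_zero hS, huvv, huuv] using congr($hTk v)
  have hα : α = 0 := by
    simpa [hβ, hpv, hF.upp_eq_zero hS, hF.uvp_eq_zero hS, hF.ppp_ne_zero] using congr($hTk p)
  have hγ : γ = 0 := by simpa [hα, hβ, hpv, hS.swap_right u v u, huuv] using congr($hTk u)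
  simp [hα, hβ, hγ] at hk

theorem v_apply_eq_zero (hF : T.AdaptedFrame p u v) (hS : T.IsSymm)
    (hV : Module.finrank K V = 3) (hT : ∀ e, ¬ (T e).Nondegenerate) : T v = 0 := by
  have huvv : T u v v = 0 := hF.uvv_eq_zero hS hV (hT u)
  have hvvv : T v v v = 0 := by
    simpa [huvv] using (hF.add_right hS).uvv_eq_zero hS hV (hT (u + v))
  have huuv : T u u v = 0 := hF.uuv_eq_zero hS hV huvv (hT (p + u))
  have hvp : T v p = 0 := by rw [hS.swap_left, hF.pv_eq_zero]
  have hvuu : T v u u = 0 := by rw [hS.swap_left, hS.swap_right, huuv]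
  have hvuv : T v u v = 0 := by rw [hS.swap_left, huvv]
  ext x y
  obtain ⟨α, β, γ, rfl⟩ := hF.exists_smul_add_eq hS hV x
  obtain ⟨α', β', γ', rfl⟩ := hF.exists_smul_add_eq hS hV y
  simp [hvp, hvuu, hvuv, hvvv, hS.swap_right v u p, hS.swap_right v v p, hS.swap_right v v u]

end AdaptedFrame

theorem IsSymm.exists_apply_eq_zero_of_finrank_eq_three (hS : T.IsSymm) (h6 : (6 : K) ≠ 0)
    (hV : Module.finrank K V = 3) (hT : ∀ e, ¬ (T e).Nondegenerate) : ∃ w ≠ 0, T w = 0 := by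
  have : FiniteDimensional K V := .of_finrank_pos (by lia)
  rcases eq_or_ne T 0 with rfl | hT0
  · obtain ⟨w, hw, -⟩ := not_nondegenerate_iff_exists_ne_zero.mp (hT 0)
    exact ⟨w, hw, rfl⟩
  obtain ⟨p, hp⟩ := hS.exists_apply_self_ne_zero h6 hT0
  by_cases hpW : ∀ u, T p p u = 0 → T p u = 0
  · have hW : Module.finrank K (LinearMap.ker (T p p)) + 1 = Module.finrank K V :=
      Module.Dual.finrank_ker_add_one_of_ne_zero fun h => hp (by simp [h])
    obtain ⟨w, hw, hTw⟩ := (hS.restrict _).exists_apply_eq_zero_of_finrank_eq_two h6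
      (by lia) fun e => hS.not_nondegenerate_restrict_ker hp hpW e (hT (p + e))
    exact ⟨w, by simpa using hw, hS.apply_eq_zero_of_restrict_ker hp hpW hTw⟩
  · push Not at hpW
    obtain ⟨u, hppu, hpu⟩ := hpW
    obtain ⟨v, hv, hpv⟩ := not_nondegenerate_iff_exists_ne_zero.mp (hT p)
    have hF : T.AdaptedFrame p u v := ⟨hp, hpv, hv, hppu, hpu⟩
    exact ⟨v, hv, hF.v_apply_eq_zero hS hV hT⟩

end Field

end TrilinForm

section Polynomial

variable {R σ : Type*} [CommRing R]

lemma pderiv_comm (i j : σ) (P : MvPolynomial σ R) :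
    pderiv i (pderiv j P) = pderiv j (pderiv i P) := by
  classical
  let D (k : σ) : Derivation R (MvPolynomial σ R) (MvPolynomial σ R) := pderiv k
  have h : ⁅D i, D j⁆ = 0 := derivation_ext fun k => by
    simp [D, Derivation.commutator_apply, pderiv_X, Pi.single_apply, apply_ite]
  exact sub_eq_zero.mp (by simpa [D, Derivation.commutator_apply] using DFunLike.congr_fun h P)

variable [Fintype σ]

/-- The directional derivative `∂ₑP`, bilinear in the direction `e` and the polynomial `P`. -/
noncomputable def directionalDeriv : (σ → R) →ₗ[R] MvPolynomial σ R →ₗ[R] MvPolynomial σ R :=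
  Fintype.linearCombination R fun i => (pderiv i).toLinearMap

/-- The Hessian of a polynomial at the origin, as a bilinear form. For a quadratic form it is twice
the associated symmetric form. -/
noncomputable def hessianAtZero : MvPolynomial σ R →ₗ[R] LinearMap.BilinForm R (σ → R) :=
  directionalDeriv.flip.compr₂ (directionalDeriv.flip.compr₂ (lcoeff R 0))

/-- The third derivative of a polynomial at the origin, as a trilinear form. For a cubic form it is
six times the polarization. -/
noncomputable def thirdDerivAtZero : MvPolynomial σ R →ₗ[R] TrilinForm R (σ → R) :=
  directionalDeriv.flip.compr₂ hessianAtZero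

lemma directionalDeriv_apply (e : σ → R) (P : MvPolynomial σ R) :
    directionalDeriv e P = ∑ i, e i • pderiv i P := by
  simp [directionalDeriv, Fintype.linearCombination_apply]

lemma hessianAtZero_apply (P : MvPolynomial σ R) (x y : σ → R) :
    hessianAtZero P x y = coeff 0 (directionalDeriv y (directionalDeriv x P)) :=
  rfl

lemma thirdDerivAtZero_apply (P : MvPolynomial σ R) (e : σ → R) :
    thirdDerivAtZero P e = hessianAtZero (directionalDeriv e P) :=
  rfl

@[simp]
lemma directionalDeriv_single_one [DecidableEq σ] (i : σ) (P : MvPolynomial σ R) :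
    directionalDeriv (Pi.single i 1) P = pderiv i P := by
  simp [directionalDeriv]

lemma directionalDeriv_comm (x y : σ → R) (P : MvPolynomial σ R) :
    directionalDeriv x (directionalDeriv y P) = directionalDeriv y (directionalDeriv x P) := by
  simp only [directionalDeriv_apply, map_sum, map_smul, Finset.smul_sum]
  rw [Finset.sum_comm]
  simp only [smul_comm (x _), pderiv_comm]

lemma isSymm_thirdDerivAtZero (P : MvPolynomial σ R) : (thirdDerivAtZero P).IsSymm where
  swap_left x y := by
    ext1 z
    simp only [thirdDerivAtZero_apply, hessianAtZero_apply, directionalDeriv_comm y x]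
  swap_right x y z := by
    simp only [thirdDerivAtZero_apply, hessianAtZero_apply, directionalDeriv_comm z y]

lemma toMatrix'_hessianAtZero [DecidableEq σ] (P : MvPolynomial σ R) :
    LinearMap.BilinForm.toMatrix' (hessianAtZero P) =
      .of fun i j => eval 0 (pderiv i (pderiv j P)) := by
  ext i j
  simp [LinearMap.BilinForm.toMatrix'_apply, hessianAtZero_apply, pderiv_comm j i,
    ← constantCoeff_eq, eval_zero]

lemma isHomogeneous_directionalDeriv {P : MvPolynomial σ R} {n : ℕ} (hP : P.IsHomogeneous n)
    (e : σ → R) : (directionalDeriv e P).IsHomogeneous (n - 1) := by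
  rw [directionalDeriv_apply]
  exact Submodule.sum_mem (homogeneousSubmodule σ R (n - 1)) fun i _ =>
    Submodule.smul_mem _ _ hP.pderiv

lemma eq_zero_of_directionalDeriv_eq_zero [IsDomain R] {P : MvPolynomial σ R} {n : ℕ}
    (hP : P.IsHomogeneous n) (hn : (n : R) ≠ 0) (h : ∀ e, directionalDeriv e P = 0) : P = 0 := by
  classical
  have hEuler : (n : R) • P = 0 := by
    simpa [← directionalDeriv_single_one, h, Nat.cast_smul_eq_nsmul]
      using hP.sum_X_mul_pderiv.symm
  exact (smul_eq_zero.mp hEuler).resolve_left hn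

lemma eq_zero_of_hessianAtZero_eq_zero [IsDomain R] {P : MvPolynomial σ R}
    (hP : P.IsHomogeneous 2) (h2 : (2 : R) ≠ 0) (h : hessianAtZero P = 0) : P = 0 := by
  refine eq_zero_of_directionalDeriv_eq_zero hP (mod_cast h2) fun x => ?_
  have hx := isHomogeneous_directionalDeriv hP x
  refine eq_zero_of_directionalDeriv_eq_zero hx (by simp) fun y => ?_
  have hxy := isHomogeneous_directionalDeriv hx y
  rw [← totalDegree_zero_iff_isHomogeneous, totalDegree_eq_zero_iff_eq_C] at hxy
  rw [hxy, ← hessianAtZero_apply, h, LinearMap.zero_apply, LinearMap.zero_apply, C_0]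

end Polynomial

theorem cubic_form_all_directional_hessians_degenerate_general {K : Type*} [Field K]
    (h6 : (6 : K) ≠ 0) {Q : MvPolynomial (Fin 3) K} (hQ : Q.IsHomogeneous 3)
    (h_deg : ∀ e, ¬ (hessianAtZero (directionalDeriv e Q)).Nondegenerate) :
    ∃ w ≠ 0, directionalDeriv w Q = 0 := by
  have h2 : (2 : K) ≠ 0 := fun h => h6 (by linear_combination 3 * h)
  obtain ⟨w, hw, hTw⟩ :=
    (isSymm_thirdDerivAtZero Q).exists_apply_eq_zero_of_finrank_eq_three h6 (by simp) h_deg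
  exact ⟨w, hw, eq_zero_of_hessianAtZero_eq_zero (isHomogeneous_directionalDeriv hQ w) h2 hTw⟩

section Real

lemma dirDeriv_eq_directionalDeriv (e : Fin 3 → ℝ) (P : MvPolynomial (Fin 3) ℝ) :
    dirDeriv e P = directionalDeriv e P := by
  simp only [dirDeriv, directionalDeriv_apply, C_mul']

lemma hessDet_eq_zero_iff (P : MvPolynomial (Fin 3) ℝ) :
    hessDet P = 0 ↔ ¬ (hessianAtZero P).Nondegenerate := by
  rw [LinearMap.BilinForm.nondegenerate_iff_det_ne_zero (Pi.basisFun ℝ (Fin 3)), not_not,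
    LinearMap.BilinForm.toMatrix_basisFun, toMatrix'_hessianAtZero, hessDet]

lemma exists_sum_sq_eq_one_smul_eq {ι : Type*} [Fintype ι] {e : ι → ℝ} (he : e ≠ 0) :
    ∃ (r : ℝ) (u : ι → ℝ), ∑ i, u i ^ 2 = 1 ∧ r • u = e := by
  set x : EuclideanSpace ℝ ι := WithLp.toLp 2 e
  have hx : x ≠ 0 := by simpa [x] using he
  refine ⟨‖x‖, (NormedSpace.normalize x).ofLp, ?_, ?_⟩
  · rw [← EuclideanSpace.real_norm_sq_eq, NormedSpace.norm_normalize hx, one_pow]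
  · rw [← WithLp.ofLp_smul, NormedSpace.norm_smul_normalize]

lemma not_nondegenerate_hessianAtZero_of_hessDet_eq_zero {Q : MvPolynomial (Fin 3) ℝ}
    (h : ∀ e : Fin 3 → ℝ, (∑ i, e i ^ 2) = 1 → hessDet (dirDeriv e Q) = 0) (e : Fin 3 → ℝ) :
    ¬ (hessianAtZero (directionalDeriv e Q)).Nondegenerate := by
  rcases eq_or_ne e 0 with rfl | he
  · simpa using LinearMap.BilinForm.not_nondegenerate_zero ℝ (Fin 3 → ℝ)
  obtain ⟨r, u, hu, rfl⟩ := exists_sum_sq_eq_one_smul_eq he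
  have hdeg := h u hu
  rw [dirDeriv_eq_directionalDeriv, hessDet_eq_zero_iff,
    not_nondegenerate_iff_exists_ne_zero] at hdeg
  obtain ⟨v, hv, huv⟩ := hdeg
  exact not_nondegenerate_iff_exists_ne_zero.mpr ⟨v, hv, by simp [huv]⟩

end Real

/-- Lemma 3: a cubic form `Q` on `ℝ³` such that the quadratic form `Q_e = ∂ₑQ` is
degenerate for every unit vector `e ∈ S²` is a function of two variables in suitable
linear coordinates; equivalently, some nonzero directional derivative of `Q`
vanishes identically. -/
theorem cubic_form_all_directional_hessians_degenerate
    (Q : MvPolynomial (Fin 3) ℝ) (hQ : Q.IsHomogeneous 3)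
    (h_deg : ∀ e : Fin 3 → ℝ, (∑ i, e i ^ 2) = 1 → hessDet (dirDeriv e Q) = 0) :
    ∃ w : Fin 3 → ℝ, w ≠ 0 ∧ dirDeriv w Q = 0 := by
  obtain ⟨w, hw, hwQ⟩ := cubic_form_all_directional_hessians_degenerate_general (by norm_num) hQ
    (not_nondegenerate_hessianAtZero_of_hessDet_eq_zero h_deg)
  exact ⟨w, hw, (dirDeriv_eq_directionalDeriv w Q).trans hwQ⟩
end

section
/- Let u : ℝ⁴ ∖ {0} → ℝ be real analytic and positively homogeneous of order 2. Let a, b ∈ S³ with a ≠ b, and suppose x ∈ S³ is a point at which the function u_{a,b}(y) = D²u(y)(a,b) attains its supremum over S³. Then D³u(x)(a,b,e) = 0 for every e ∈ ℝ⁴; that is, b is a zero eigenvector of the quadratic form v ↦ D³u(x)(a,v,v) (the cubic form of the Taylor expansion of u at x differentiated in direction a). -/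
/-!
If `u` is positively homogeneous of order `n`, its `n`-th directional derivatives are positively
homogeneous of order `0`, that is, constant along rays. A local extremum of such a function over
the unit sphere is therefore a local extremum over the whole space, so its full gradient vanishes
there, not only the tangential part. Symmetry of the derivatives puts the last differentiation
direction where it is wanted.
-/

open Filter Metric
open scoped Topology

section Homogeneous

variable {E F G : Type*} [NormedAddCommGroup E] [NormedSpace ℝ E]
  [NormedAddCommGroup F] [NormedSpace ℝ F] [NormedAddCommGroup G] [NormedSpace ℝ G]

/-- Positive homogeneity of real order `k` away from the origin; the value at `0` is
unconstrained, so that functions on `E ∖ {0}` are modelled by arbitrary extensions to `E`. -/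
def IsPositivelyHomogeneous (k : ℝ) (f : E → F) : Prop :=
  ∀ t : ℝ, 0 < t → ∀ x : E, x ≠ 0 → f (t • x) = t ^ k • f x

namespace IsPositivelyHomogeneous

variable {k : ℝ} {f : E → F}

theorem continuousLinearMap_comp (L : F →L[ℝ] G) (hf : IsPositivelyHomogeneous k f) :
    IsPositivelyHomogeneous k (L ∘ f) := fun t ht x hx => by
  rw [Function.comp_apply, hf t ht x hx, map_smul, Function.comp_apply]

protected theorem fderiv (hf : IsPositivelyHomogeneous k f) :
    IsPositivelyHomogeneous (k - 1) (fderiv ℝ f) := fun t ht x hx => by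
  have scaled_eq : (fun y => f (t • y)) =ᶠ[𝓝 x] t ^ k • f := by
    filter_upwards [isOpen_ne.mem_nhds hx] with y hy using hf t ht y hy
  have smul_fderiv : t • fderiv ℝ f (t • x) = t ^ k • fderiv ℝ f x := by
    rw [← fderiv_comp_smul, scaled_eq.fderiv_eq, fderiv_const_smul_field, Pi.smul_apply]
  rw [Real.rpow_sub_one ht.ne', div_eq_inv_mul, mul_smul, ← smul_fderiv, inv_smul_smul₀ ht.ne']

protected theorem iteratedFDeriv (hf : IsPositivelyHomogeneous k f) (n : ℕ) :
    IsPositivelyHomogeneous (k - n) (iteratedFDeriv ℝ n f) := by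
  induction n with
  | zero =>
    rw [Nat.cast_zero, sub_zero, iteratedFDeriv_zero_eq_comp]
    exact hf.continuousLinearMap_comp
      (continuousMultilinearCurryFin0 ℝ E F).symm.toContinuousLinearEquiv.toContinuousLinearMap
  | succ n ih =>
    rw [Nat.cast_succ, ← sub_sub, iteratedFDeriv_succ_eq_comp_left]
    exact ih.fderiv.continuousLinearMap_comp (continuousMultilinearCurryLeftEquiv ℝ
      (fun _ : Fin (n + 1) => E) F).symm.toContinuousLinearEquiv.toContinuousLinearMap

theorem iteratedFDeriv_apply {n : ℕ} (hf : IsPositivelyHomogeneous k f) (v : Fin n → E) :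
    IsPositivelyHomogeneous (k - n) (fun x => iteratedFDeriv ℝ n f x v) :=
  (hf.iteratedFDeriv n).continuousLinearMap_comp
    (ContinuousMultilinearMap.apply ℝ (fun _ : Fin n => E) F v)

theorem apply_normalize (hf : IsPositivelyHomogeneous 0 f) {x : E} (hx : x ≠ 0) :
    f (NormedSpace.normalize x) = f x := by
  simpa only [Real.rpow_zero, one_smul] using! hf ‖x‖⁻¹ (inv_pos.2 (norm_pos_iff.2 hx)) x hx

end IsPositivelyHomogeneous

theorem tendsto_normalize_nhdsWithin_sphere {x : E} (hx : x ≠ 0) :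
    Tendsto NormedSpace.normalize (𝓝 x) (𝓝[sphere 0 1] (NormedSpace.normalize x)) := by
  refine tendsto_nhdsWithin_iff.2 ⟨?_, ?_⟩
  · exact (continuousAt_id.norm.inv₀ (norm_ne_zero_iff.2 hx)).smul continuousAt_id
  · filter_upwards [isOpen_ne.mem_nhds hx] with y hy
    exact mem_sphere_zero_iff_norm.2 (NormedSpace.norm_normalize hy)

theorem IsPositivelyHomogeneous.isLocalExtr_of_isLocalExtrOn_sphere {f : E → ℝ} {x : E}
    (hf : IsPositivelyHomogeneous 0 f) (hx : ‖x‖ = 1) (hext : IsLocalExtrOn f (sphere 0 1) x) :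
    IsLocalExtr f x := by
  have hx₀ : x ≠ 0 := norm_ne_zero_iff.1 (hx ▸ one_ne_zero)
  have constant_on_rays : f ∘ NormedSpace.normalize =ᶠ[𝓝 x] f := by
    filter_upwards [isOpen_ne.mem_nhds hx₀] with y hy using hf.apply_normalize hy
  have extr_at_normalize : IsExtrFilter f (𝓝[sphere 0 1] (NormedSpace.normalize x))
      (NormedSpace.normalize x) := by
    rwa [NormedSpace.normalize_eq_self_of_norm_eq_one hx]
  exact constant_on_rays.isLocalExtr_iff.1
    (extr_at_normalize.comp_tendsto (tendsto_normalize_nhdsWithin_sphere hx₀))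

end Homogeneous

section Symmetry

variable {𝕜 E F : Type*} [RCLike 𝕜] [NormedAddCommGroup E] [NormedSpace 𝕜 E]
  [NormedAddCommGroup F] [NormedSpace 𝕜 F]

theorem iteratedFDeriv_cons_cons {n : ℕ} (f : E → F) (x a b : E) (v : Fin n → E) :
    iteratedFDeriv 𝕜 (n + 2) f x (Fin.cons a (Fin.cons b v)) =
      fderiv 𝕜 (fderiv 𝕜 (iteratedFDeriv 𝕜 n f)) x a b v := by
  have fderiv_uncurryLeft := LinearIsometryEquiv.comp_fderiv
    (𝕜 := 𝕜) (E := E →L[𝕜] E [×n]→L[𝕜] F) (F := E [×(n + 1)]→L[𝕜] F)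
    (continuousMultilinearCurryLeftEquiv 𝕜 (fun _ : Fin (n + 1) => E) F).symm
    (f := fderiv 𝕜 (iteratedFDeriv 𝕜 n f)) (x := x)
  exact DFunLike.congr_fun (DFunLike.congr_fun fderiv_uncurryLeft a) (Fin.cons b v)

theorem iteratedFDeriv_cons_cons_comm {n : ℕ} {f : E → F} {x : E}
    (hf : ContDiffAt 𝕜 (n + 2) f x) (a b : E) (v : Fin n → E) :
    iteratedFDeriv 𝕜 (n + 2) f x (Fin.cons a (Fin.cons b v)) =
      iteratedFDeriv 𝕜 (n + 2) f x (Fin.cons b (Fin.cons a v)) := by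
  have symm : IsSymmSndFDerivAt 𝕜 (iteratedFDeriv 𝕜 n f) x :=
    (hf.iteratedFDeriv_right (m := 2) (add_comm _ _).le).isSymmSndFDerivAt (by simp)
  rw [iteratedFDeriv_cons_cons, iteratedFDeriv_cons_cons, symm.eq]

theorem iteratedFDeriv_snoc_eq_cons {n : ℕ} {f : E → F} {x : E}
    (hf : ContDiffAt 𝕜 (n + 1) f x) (v : Fin n → E) (e : E) :
    iteratedFDeriv 𝕜 (n + 1) f x (Fin.snoc v e) = iteratedFDeriv 𝕜 (n + 1) f x (Fin.cons e v) := by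
  induction n generalizing x with
  | zero => congr 1; ext i; fin_cases i; rfl
  | succ n ih =>
    have ih_near : (fun y => iteratedFDeriv 𝕜 (n + 1) f y (Fin.snoc (Fin.tail v) e)) =ᶠ[𝓝 x]
        fun y => iteratedFDeriv 𝕜 (n + 1) f y (Fin.cons e (Fin.tail v)) := by
      filter_upwards [hf.eventually (by simp)] with y hy
      exact ih (hy.of_le (by simp)) (Fin.tail v)
    have h_deriv : DifferentiableAt 𝕜 (iteratedFDeriv 𝕜 (n + 1) f) x :=
      hf.differentiableAt_iteratedFDeriv (by exact_mod_cast Nat.lt_succ_self _)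
    calc iteratedFDeriv 𝕜 (n + 2) f x (Fin.snoc v e)
        = iteratedFDeriv 𝕜 (n + 2) f x (Fin.cons (v 0) (Fin.snoc (Fin.tail v) e)) := by
          rw [Fin.cons_snoc_eq_snoc_cons, Fin.cons_self_tail]
      _ = iteratedFDeriv 𝕜 (n + 2) f x (Fin.cons (v 0) (Fin.cons e (Fin.tail v))) := by
          simp only [h_deriv.iteratedFDeriv_succ_apply_left', Fin.cons_zero, Fin.tail_cons,
            ih_near.fderiv_eq]
      _ = iteratedFDeriv 𝕜 (n + 2) f x (Fin.cons e (Fin.cons (v 0) (Fin.tail v))) :=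
          iteratedFDeriv_cons_cons_comm (by exact_mod_cast hf) _ _ _
      _ = iteratedFDeriv 𝕜 (n + 2) f x (Fin.cons e v) := by rw [Fin.cons_self_tail]

end Symmetry

theorem zero_eigenvector_at_supremum_of_second_derivative_general
    {E : Type*} [NormedAddCommGroup E] [NormedSpace ℝ E] {n : ℕ} {u : E → ℝ} {x : E}
    (h_diff : ContDiffAt ℝ (n + 1) u x) (h_hom : IsPositivelyHomogeneous n u)
    (v : Fin n → E) (hx : ‖x‖ = 1)
    (h_ext : IsLocalExtrOn (fun y => iteratedFDeriv ℝ n u y v) (sphere 0 1) x) (e : E) :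
    iteratedFDeriv ℝ (n + 1) u x (Fin.snoc v e) = 0 := by
  have order_zero : IsPositivelyHomogeneous 0 (fun y => iteratedFDeriv ℝ n u y v) := by
    simpa only [sub_self] using h_hom.iteratedFDeriv_apply v
  have gradient_zero : fderiv ℝ (fun y => iteratedFDeriv ℝ n u y v) x = 0 :=
    (order_zero.isLocalExtr_of_isLocalExtrOn_sphere hx h_ext).fderiv_eq_zero
  have h_deriv : DifferentiableAt ℝ (iteratedFDeriv ℝ n u) x :=
    h_diff.differentiableAt_iteratedFDeriv (by exact_mod_cast Nat.lt_succ_self _)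
  rw [iteratedFDeriv_snoc_eq_cons h_diff, h_deriv.iteratedFDeriv_succ_apply_left', Fin.tail_cons,
    gradient_zero, zero_apply]

/-- Lemma 5: let `u` be real analytic and positively 2-homogeneous on `ℝ⁴ ∖ {0}`.
If `a ≠ b` are unit vectors and the function `u_{a,b}(y) = D²u(y)(a,b)` attains its
supremum over the unit sphere `S³` at `x`, then `D³u(x)(a,b,e) = 0` for every `e`;
that is, `b` is a zero eigenvector of the quadratic form `v ↦ D³u(x)(a,v,v)`. -/
theorem zero_eigenvector_at_supremum_of_second_derivative
    (u : EuclideanSpace ℝ (Fin 4) → ℝ)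
    (h_an : AnalyticOnNhd ℝ u {x | x ≠ 0})
    (h_hom : ∀ t : ℝ, 0 < t → ∀ x : EuclideanSpace ℝ (Fin 4), x ≠ 0 →
      u (t • x) = t ^ 2 * u x)
    (a b : EuclideanSpace ℝ (Fin 4)) (ha : ‖a‖ = 1) (hb : ‖b‖ = 1) (hab : a ≠ b)
    (x : EuclideanSpace ℝ (Fin 4)) (hx : ‖x‖ = 1)
    (h_sup : ∀ y : EuclideanSpace ℝ (Fin 4), ‖y‖ = 1 →
      iteratedFDeriv ℝ 2 u y ![a, b] ≤ iteratedFDeriv ℝ 2 u x ![a, b]) :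
    ∀ e : EuclideanSpace ℝ (Fin 4), iteratedFDeriv ℝ 3 u x ![a, b, e] = 0 := by
  intro e
  have hx₀ : x ≠ 0 := norm_ne_zero_iff.1 (hx ▸ one_ne_zero)
  have order_two : IsPositivelyHomogeneous (2 : ℕ) u := fun t ht y hy => by
    simpa only [Real.rpow_natCast, smul_eq_mul] using h_hom t ht y hy
  have h_max : IsMaxOn (fun y => iteratedFDeriv ℝ 2 u y ![a, b]) (sphere 0 1) x :=
    fun y hy => h_sup y (mem_sphere_zero_iff_norm.1 hy)
  simpa using zero_eigenvector_at_supremum_of_second_derivative_general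
    (h_an x hx₀).contDiffAt order_two ![a, b] hx h_max.localize.isExtr e
end

section
/- Let u : ℝ⁴ ∖ {0} → ℝ be real analytic, positively homogeneous of order 2, and a solution of F(D²u) = 0 on ℝ⁴ ∖ {0} with F a smooth uniformly elliptic function on symmetric 4×4 matrices. Let a, x, b₁, b₂, b₃ ∈ S³ with b₁, b₂, b₃ linearly independent, and suppose that for each i = 1, 2, 3 the function u_{a,b_i}(y) = D²u(y)(a,b_i) attains its supremum over S³ at x. Then D³u(x)(a,v,w) = 0 for all v, w ∈ ℝ⁴, i.e. the quadratic form v ↦ D³u(x)(a,v,v) is identically zero. -/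
/-- The Hessian matrix of `u` at `x`, with entries `∂²u/∂xᵢ∂xⱼ (x)`. -/
noncomputable def hessianMatrix (n : ℕ) (u : EuclideanSpace ℝ (Fin n) → ℝ)
    (x : EuclideanSpace ℝ (Fin n)) : Fin n → Fin n → ℝ :=
  fun i j => iteratedFDeriv ℝ 2 u x ![EuclideanSpace.single i 1, EuclideanSpace.single j 1]

/-- `F` is a smooth uniformly elliptic function on (symmetric) `n × n` matrices. -/
def UniformlyElliptic (n : ℕ) (F : (Fin n → Fin n → ℝ) → ℝ) : Prop :=
  ContDiff ℝ (⊤ : ℕ∞) F ∧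
  ∃ C : ℝ, 1 ≤ C ∧ ∀ M : Fin n → Fin n → ℝ, (∀ i j, M i j = M j i) →
    ∀ ξ : EuclideanSpace ℝ (Fin n),
      (1 / C) * ‖ξ‖ ^ 2 ≤
          ∑ i, ∑ j, fderiv ℝ F M (Pi.single i (Pi.single j 1)) * ξ i * ξ j ∧
      ∑ i, ∑ j, fderiv ℝ F M (Pi.single i (Pi.single j 1)) * ξ i * ξ j ≤ C * ‖ξ‖ ^ 2

/-!
Second derivatives of a 2-homogeneous function are 0-homogeneous, so a maximum of `u_{a,bᵢ}` over
the sphere is a local maximum in the whole space, and there `D³u(x)(a, bᵢ, ·) = 0`. A symmetric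
bilinear form killed by the hyperplane spanned by the `bᵢ` is `c φ ⊗ φ`, where `φ` is a linear form
with that hyperplane as kernel. Differentiating `F(D²u) = 0` in the direction `a` gives
`c ∑ᵢⱼ F_{ij} φᵢ φⱼ = 0`, and ellipticity forces `c = 0`.
-/

open Filter Module Topology

section LinearAlgebra

lemma map_eq_sum_sum_smul_single {R P ι κ : Type*} [Semiring R] [AddCommMonoid P] [Module R P]
    [Fintype ι] [Fintype κ] [DecidableEq ι] [DecidableEq κ] (L : (ι → κ → R) →ₗ[R] P)
    (A : ι → κ → R) : L A = ∑ i, ∑ j, A i j • L (Pi.single i (Pi.single j 1)) := by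
  have hA : A = ∑ i, ∑ j, A i j • (Pi.single i (Pi.single j 1) : ι → κ → R) := by
    ext k l
    simp [Finset.sum_apply, Pi.single_apply, ite_apply]
  conv_lhs => rw [hA]
  simp only [map_sum, map_smul]

variable {K V : Type*} [Field K] [AddCommGroup V] [Module K V]

lemma exists_dual_ker_eq_span_range [FiniteDimensional K V] {ι : Type*} [Fintype ι] {b : ι → V}
    (hb : LinearIndependent K b) (hcard : Fintype.card ι + 1 = finrank K V) :
    ∃ φ : Dual K V, φ ≠ 0 ∧ LinearMap.ker φ = Submodule.span K (Set.range b) := by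
  have hspan : finrank K (Submodule.span K (Set.range b)) = Fintype.card ι :=
    finrank_span_eq_card hb
  obtain ⟨φ, hφ, hle⟩ := Submodule.exists_le_ker_of_lt_top (Submodule.span K (Set.range b))
    (Submodule.lt_top_of_finrank_lt_finrank (by lia))
  have hker : finrank K (LinearMap.ker φ) + 1 = finrank K V :=
    Dual.finrank_ker_add_one_of_ne_zero hφ
  exact ⟨φ, hφ, (Submodule.eq_of_le_of_finrank_eq hle (by lia)).symm⟩

lemma exists_apply_eq_mul_mul_of_ker_le_ker {B : LinearMap.BilinForm K V} (hB : B.IsSymm)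
    {φ : Dual K V} (hker : LinearMap.ker φ ≤ LinearMap.ker B) :
    ∃ c : K, ∀ v w, B v w = c * (φ v * φ w) := by
  obtain rfl | hφ := eq_or_ne φ 0
  · exact ⟨0, fun v w => by simp [show B v = 0 from hker (by simp)]⟩
  obtain ⟨e, he⟩ : ∃ e, φ e = 1 := LinearMap.surjective hφ 1
  have hleft : ∀ v w, B v w = φ v * B e w := by
    intro v w
    have hmem : v - φ v • e ∈ LinearMap.ker φ := by simp [he]
    have hzero : B (v - φ v • e) = 0 := hker hmem
    rw [map_sub, map_smul, sub_eq_zero] at hzero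
    simp [hzero]
  refine ⟨B e e, fun v w => ?_⟩
  rw [hleft v w, hB.eq, hleft w e]
  ring

end LinearAlgebra

section Calculus

lemma iteratedFDeriv_add_two_apply {𝕜 E G : Type*} [NontriviallyNormedField 𝕜]
    [NormedAddCommGroup E] [NormedSpace 𝕜 E] [NormedAddCommGroup G] [NormedSpace 𝕜 G]
    {f : E → G} {x : E} {n : ℕ} (v : Fin (n + 2) → E) :
    iteratedFDeriv 𝕜 (n + 2) f x v =
      fderiv 𝕜 (fderiv 𝕜 (iteratedFDeriv 𝕜 n f)) x (v 0) (v 1) (Fin.tail (Fin.tail v)) :=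
  congrArg (fun L => L (v 0) (Fin.tail v)) <| LinearIsometryEquiv.comp_fderiv
    (𝕜 := 𝕜) (E := E →L[𝕜] E [×n]→L[𝕜] G) (F := E [×(n + 1)]→L[𝕜] G)
    (continuousMultilinearCurryLeftEquiv 𝕜 (fun _ : Fin (n + 1) => E) G).symm

variable {𝕜 E G : Type*} [RCLike 𝕜] [NormedAddCommGroup E] [NormedSpace 𝕜 E]
  [NormedAddCommGroup G] [NormedSpace 𝕜 G] {f : E → G} {x : E} {n : ℕ}

lemma iteratedFDeriv_comp_swap_zero_one (hf : ContDiffAt 𝕜 (n + 2) f x) (v : Fin (n + 2) → E) :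
    iteratedFDeriv 𝕜 (n + 2) f x (v ∘ Equiv.swap 0 1) = iteratedFDeriv 𝕜 (n + 2) f x v := by
  have hsymm : IsSymmSndFDerivAt 𝕜 (iteratedFDeriv 𝕜 n f) x :=
    (hf.iteratedFDeriv_right (m := 2) (by rw [add_comm])).isSymmSndFDerivAt (by simp)
  have htail : Fin.tail (Fin.tail (v ∘ Equiv.swap 0 1)) = Fin.tail (Fin.tail v) := by
    ext i
    exact congrArg v (Equiv.swap_apply_of_ne_of_ne (Fin.succ_ne_zero _) (by simp [Fin.ext_iff]))
  rw [iteratedFDeriv_add_two_apply, iteratedFDeriv_add_two_apply, htail, hsymm.eq]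
  simp

lemma iteratedFDeriv_comp_swap_castSucc_succ (hf : ContDiffAt 𝕜 (n + 1) f x) (i : Fin n)
    (v : Fin (n + 1) → E) :
    iteratedFDeriv 𝕜 (n + 1) f x (v ∘ Equiv.swap i.castSucc i.succ) =
      iteratedFDeriv 𝕜 (n + 1) f x v := by
  induction n generalizing x with
  | zero => exact i.elim0
  | succ n ih =>
    cases i using Fin.cases with
    | zero => exact iteratedFDeriv_comp_swap_zero_one (by exact_mod_cast hf) v
    | succ i =>
      have hdiff : DifferentiableAt 𝕜 (iteratedFDeriv 𝕜 (n + 1) f) x :=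
        hf.differentiableAt_iteratedFDeriv (by norm_cast; lia)
      have htail : Fin.tail (v ∘ Equiv.swap i.succ.castSucc i.succ.succ) =
          Fin.tail v ∘ Equiv.swap i.castSucc i.succ := by
        ext j
        exact congrArg v ((Fin.succ_injective (n + 1)).swap_apply i.castSucc i.succ j)
      rw [hdiff.iteratedFDeriv_succ_apply_left', hdiff.iteratedFDeriv_succ_apply_left', htail]
      have hev : ∀ᶠ y in 𝓝 x, ContDiffAt 𝕜 (n + 1) f y :=
        (hf.of_le (by norm_cast; lia)).eventually (by exact_mod_cast WithTop.coe_ne_top)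
      have hzero : Equiv.swap i.succ.castSucc i.succ.succ 0 = 0 :=
        Equiv.swap_apply_of_ne_of_ne (by simp [Fin.ext_iff]) (by simp [Fin.ext_iff])
      rw [Function.comp_apply, hzero,
        Filter.EventuallyEq.fderiv_eq (hev.mono fun y hy => ih hy i (Fin.tail v))]

theorem iteratedFDeriv_comp_perm_of_contDiffAt (hf : ContDiffAt 𝕜 n f x) (σ : Equiv.Perm (Fin n))
    (v : Fin n → E) : iteratedFDeriv 𝕜 n f x (v ∘ σ) = iteratedFDeriv 𝕜 n f x v := by
  cases n with
  | zero => exact congrArg _ (Subsingleton.elim _ _)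
  | succ n =>
    have hσ : σ ∈ Submonoid.closure (Set.range fun i : Fin n => Equiv.swap i.castSucc i.succ) := by
      rw [Equiv.Perm.mclosure_swap_castSucc_succ]
      trivial
    induction hσ using Submonoid.closure_induction generalizing v with
    | mem τ hτ =>
      obtain ⟨i, rfl⟩ := hτ
      exact iteratedFDeriv_comp_swap_castSucc_succ (by exact_mod_cast hf) i v
    | one => rfl
    | mul τ ρ _ _ hτ hρ => rw [Equiv.Perm.coe_mul, ← Function.comp_assoc, hρ, hτ]

end Calculus

section Homogeneous

lemma pow_smul_iteratedFDeriv_smul {𝕜 E G : Type*} [NontriviallyNormedField 𝕜]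
    [NormedAddCommGroup E] [NormedSpace 𝕜 E] [NormedAddCommGroup G] [NormedSpace 𝕜 G]
    {f : E → G} {y : E} {m : ℕ} {t c : 𝕜} (hf : ContDiffAt 𝕜 m f y) (ht : t ≠ 0)
    (hhom : ∀ᶠ z in 𝓝 y, f (t • z) = c • f z) :
    t ^ m • iteratedFDeriv 𝕜 m f (t • y) = c • iteratedFDeriv 𝕜 m f y := by
  let g : E ≃L[𝕜] E := ContinuousLinearEquiv.smulLeft (Units.mk0 t ht)
  have hcomp : iteratedFDeriv 𝕜 m (f ∘ g) y = t ^ m • iteratedFDeriv 𝕜 m f (t • y) := by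
    have hright := g.iteratedFDerivWithin_comp_right f uniqueDiffOn_univ (Set.mem_univ (g y)) m
    simp only [Set.preimage_univ, iteratedFDerivWithin_univ] at hright
    ext v
    rw [hright]
    change iteratedFDeriv 𝕜 m f (t • y) (fun i => t • v i) = _
    simp [ContinuousMultilinearMap.map_smul_univ]
  have hev : f ∘ g =ᶠ[𝓝 y] c • f := hhom
  rw [← hcomp, (hev.iteratedFDeriv 𝕜 m).eq_of_nhds, iteratedFDeriv_const_smul_apply hf]

lemma iteratedFDeriv_smul_of_homogeneous {E G : Type*} [NormedAddCommGroup E] [NormedSpace ℝ E]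
    [NormedAddCommGroup G] [NormedSpace ℝ G] {f : E → G} {m : ℕ}
    (hf : ∀ y, y ≠ 0 → ContDiffAt ℝ m f y)
    (hhom : ∀ t : ℝ, 0 < t → ∀ y, y ≠ 0 → f (t • y) = t ^ m • f y)
    {t : ℝ} (ht : 0 < t) {y : E} (hy : y ≠ 0) :
    iteratedFDeriv ℝ m f (t • y) = iteratedFDeriv ℝ m f y := by
  have hnear : ∀ᶠ z in 𝓝 y, f (t • z) = t ^ m • f z :=
    (isOpen_ne.eventually_mem hy).mono (hhom t ht)
  exact smul_right_injective _ (pow_ne_zero m ht.ne')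
    (pow_smul_iteratedFDeriv_smul (hf y hy) ht.ne' hnear)

lemma isLocalMax_of_forall_norm_eq_one_le {E β : Type*} [NormedAddCommGroup E] [NormedSpace ℝ E]
    [Preorder β] {f : E → β} {x : E} (hx : x ≠ 0)
    (hhom : ∀ t : ℝ, 0 < t → ∀ y ≠ 0, f (t • y) = f y)
    (hmax : ∀ y, ‖y‖ = 1 → f y ≤ f x) : IsLocalMax f x := by
  filter_upwards [isOpen_ne.mem_nhds hx] with y hy
  rw [← hhom ‖y‖⁻¹ (inv_pos.2 (norm_pos_iff.2 hy)) y hy]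
  exact hmax _ (norm_smul_inv_norm hy)

end Homogeneous

section CubicTerm

variable {E : Type*} [NormedAddCommGroup E] [NormedSpace ℝ E] {u : E → ℝ} {x : E}

/-- The bilinear form `(v, w) ↦ D³u(x)(a, v, w)`, whose quadratic form is the cubic term of `u` at
`x` in the direction `a`. Iterating `fderiv` instead of using `iteratedFDeriv ℝ 3` makes
bilinearity automatic. -/
noncomputable def cubicTerm (u : E → ℝ) (x a : E) : LinearMap.BilinForm ℝ E :=
  (fderiv ℝ (fderiv ℝ (fderiv ℝ u)) x a).toLinearMap₁₂

lemma cubicTerm_apply (a v w : E) : cubicTerm u x a v w = iteratedFDeriv ℝ 3 u x ![a, v, w] := by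
  rw [iteratedFDeriv_succ_apply_right, iteratedFDeriv_two_apply]
  rfl

lemma cubicTerm_isSymm (hu : ContDiffAt ℝ 3 u x) (a : E) : (cubicTerm u x a).IsSymm where
  eq v w := by
    rw [cubicTerm_apply, cubicTerm_apply,
      ← iteratedFDeriv_comp_perm_of_contDiffAt hu (Equiv.swap 1 2)]
    congr 1
    ext i : 1
    fin_cases i <;> rfl

lemma cubicTerm_eq_zero_of_isLocalExtr {a b : E} (hu : ContDiffAt ℝ 3 u x)
    (hextr : IsLocalExtr (fun y => iteratedFDeriv ℝ 2 u y ![a, b]) x) :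
    cubicTerm u x a b = 0 := by
  have hdiff : DifferentiableAt ℝ (iteratedFDeriv ℝ 2 u) x :=
    hu.differentiableAt_iteratedFDeriv (by norm_cast)
  ext w
  calc cubicTerm u x a b w = iteratedFDeriv ℝ 3 u x (![w, a, b] ∘ finRotate 3) := by
        rw [cubicTerm_apply]
        congr 1
        ext i : 1
        fin_cases i <;> rfl
    _ = iteratedFDeriv ℝ 3 u x ![w, a, b] := iteratedFDeriv_comp_perm_of_contDiffAt hu _ _
    _ = fderiv ℝ (fun y => iteratedFDeriv ℝ 2 u y ![a, b]) x w :=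
      hdiff.iteratedFDeriv_succ_apply_left'
    _ = 0 := by rw [hextr.fderiv_eq_zero]; rfl

end CubicTerm

section LinearizedEquation

variable {n : ℕ} {u : EuclideanSpace ℝ (Fin n) → ℝ} {x : EuclideanSpace ℝ (Fin n)}
  {F : (Fin n → Fin n → ℝ) → ℝ}

lemma hessianMatrix_symm (hu : ContDiffAt ℝ 2 u x) (i j : Fin n) :
    hessianMatrix n u x i j = hessianMatrix n u x j i := by
  rw [hessianMatrix, ← iteratedFDeriv_comp_perm_of_contDiffAt hu (Equiv.swap 0 1)]
  congr 1
  ext k : 1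
  fin_cases k <;> rfl

lemma hasFDerivAt_hessianMatrix (hu : ContDiffAt ℝ 3 u x) :
    HasFDerivAt (hessianMatrix n u)
      (.pi fun i => .pi fun j =>
        (ContinuousMultilinearMap.apply ℝ (fun _ : Fin 2 => EuclideanSpace ℝ (Fin n)) ℝ
          ![.single i 1, .single j 1]).comp (fderiv ℝ (iteratedFDeriv ℝ 2 u) x)) x := by
  have hdiff : DifferentiableAt ℝ (iteratedFDeriv ℝ 2 u) x :=
    hu.differentiableAt_iteratedFDeriv (by norm_cast)
  refine hasFDerivAt_pi.2 fun i => hasFDerivAt_pi.2 fun j => ?_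
  exact (ContinuousMultilinearMap.apply ℝ (fun _ : Fin 2 => EuclideanSpace ℝ (Fin n)) ℝ
    ![EuclideanSpace.single i 1, EuclideanSpace.single j 1]).hasFDerivAt.comp x hdiff.hasFDerivAt

lemma linearized_equation {L : (Fin n → Fin n → ℝ) →L[ℝ] ℝ} (hu : ContDiffAt ℝ 3 u x)
    (hL : HasFDerivAt F L (hessianMatrix n u x))
    (hsol : ∀ᶠ y in 𝓝 x, F (hessianMatrix n u y) = 0) (a : EuclideanSpace ℝ (Fin n)) :
    L (fun i j => cubicTerm u x a (.single i 1) (.single j 1)) = 0 := by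
  have hzero : HasFDerivAt (F ∘ hessianMatrix n u) (0 : EuclideanSpace ℝ (Fin n) →L[ℝ] ℝ) x :=
    (hasFDerivAt_const 0 x).congr_of_eventuallyEq hsol
  have hchain := (hL.comp x (hasFDerivAt_hessianMatrix hu)).unique hzero
  simp only [cubicTerm_apply]
  exact congrArg (fun T => T a) hchain

lemma UniformlyElliptic.hasFDerivAt (hF : UniformlyElliptic n F) (M : Fin n → Fin n → ℝ) :
    HasFDerivAt F (fderiv ℝ F M) M :=
  (hF.1.differentiable (by simp) M).hasFDerivAt

lemma UniformlyElliptic.fderiv_mul_pos (hF : UniformlyElliptic n F) {M : Fin n → Fin n → ℝ}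
    (hM : ∀ i j, M i j = M j i) {ξ : Fin n → ℝ} (hξ : ξ ≠ 0) :
    0 < fderiv ℝ F M (fun i j => ξ i * ξ j) := by
  obtain ⟨-, C, hC, hell⟩ := hF
  have hnorm : 0 < ‖WithLp.toLp 2 ξ‖ := by simpa using hξ
  calc 0 < 1 / C * ‖WithLp.toLp 2 ξ‖ ^ 2 := by positivity
    _ ≤ ∑ i, ∑ j, fderiv ℝ F M (Pi.single i (Pi.single j 1)) * ξ i * ξ j := (hell M hM _).1
    _ = ∑ i, ∑ j, (ξ i * ξ j) • fderiv ℝ F M (Pi.single i (Pi.single j 1)) :=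
      Finset.sum_congr rfl fun i _ => Finset.sum_congr rfl fun j _ => by rw [smul_eq_mul]; ring
    _ = fderiv ℝ F M (fun i j => ξ i * ξ j) :=
      (map_eq_sum_sum_smul_single (fderiv ℝ F M).toLinearMap fun i j => ξ i * ξ j).symm

end LinearizedEquation

theorem cubic_term_vanishes_at_triple_supremum_general {n : ℕ}
    {u : EuclideanSpace ℝ (Fin (n + 1)) → ℝ} (h_diff : ∀ y, y ≠ 0 → ContDiffAt ℝ 3 u y)
    (h_hom : ∀ t : ℝ, 0 < t → ∀ y, y ≠ 0 → u (t • y) = t ^ 2 * u y)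
    {F : (Fin (n + 1) → Fin (n + 1) → ℝ) → ℝ} {L : (Fin (n + 1) → Fin (n + 1) → ℝ) →L[ℝ] ℝ}
    {a x : EuclideanSpace ℝ (Fin (n + 1))} (hx : x ≠ 0)
    (hL : HasFDerivAt F L (hessianMatrix (n + 1) u x))
    (hL_ell : ∀ ξ : Fin (n + 1) → ℝ, ξ ≠ 0 → L (fun i j => ξ i * ξ j) ≠ 0)
    (h_sol : ∀ᶠ y in 𝓝 x, F (hessianMatrix (n + 1) u y) = 0)
    {b : Fin n → EuclideanSpace ℝ (Fin (n + 1))} (h_ind : LinearIndependent ℝ b)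
    (h_sup : ∀ i y, ‖y‖ = 1 →
      iteratedFDeriv ℝ 2 u y ![a, b i] ≤ iteratedFDeriv ℝ 2 u x ![a, b i])
    (v w : EuclideanSpace ℝ (Fin (n + 1))) : iteratedFDeriv ℝ 3 u x ![a, v, w] = 0 := by
  have hcrit (i : Fin n) : cubicTerm u x a (b i) = 0 := by
    refine cubicTerm_eq_zero_of_isLocalExtr (h_diff x hx)
      (isLocalMax_of_forall_norm_eq_one_le hx (fun t ht y hy => ?_) (h_sup i)).isExtr
    rw [iteratedFDeriv_smul_of_homogeneous (fun z hz => (h_diff z hz).of_le (by norm_cast))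
      h_hom ht hy]
  obtain ⟨φ, hφ, hker⟩ := exists_dual_ker_eq_span_range h_ind (by simp)
  have hle : LinearMap.ker φ ≤ LinearMap.ker (cubicTerm u x a) := by
    simpa [hker, Submodule.span_le, Set.range_subset_iff] using hcrit
  obtain ⟨c, hc⟩ := exists_apply_eq_mul_mul_of_ker_le_ker (cubicTerm_isSymm (h_diff x hx) a) hle
  have hξ : (fun i => φ (.single i 1)) ≠ 0 := fun hzero =>
    hφ ((EuclideanSpace.basisFun _ ℝ).toBasis.ext fun i => by simpa using congrFun hzero i)
  have hlin : c * L (fun i j => φ (.single i 1) * φ (.single j 1)) = 0 := by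
    rw [← smul_eq_mul, ← map_smul, ← linearized_equation (h_diff x hx) hL h_sol a]
    simp only [hc]
    rfl
  have hc_zero : c = 0 := (mul_eq_zero.1 hlin).resolve_right (hL_ell _ hξ)
  rw [← cubicTerm_apply, hc, hc_zero, zero_mul]

/-- Lemma 6: let `u` be a real analytic, positively 2-homogeneous solution of a fully
nonlinear uniformly elliptic equation `F(D²u) = 0` on `ℝ⁴ ∖ {0}`. If `a, x, b₁, b₂, b₃`
are unit vectors with `b₁, b₂, b₃` linearly independent and each `u_{a,bᵢ}` attains its
supremum over `S³` at `x`, then the cubic-term quadratic form `v ↦ D³u(x)(a,v,v)`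
vanishes identically. -/
theorem cubic_term_vanishes_at_triple_supremum
    (u : EuclideanSpace ℝ (Fin 4) → ℝ)
    (h_an : AnalyticOnNhd ℝ u {x | x ≠ 0})
    (h_hom : ∀ t : ℝ, 0 < t → ∀ x : EuclideanSpace ℝ (Fin 4), x ≠ 0 →
      u (t • x) = t ^ 2 * u x)
    (F : (Fin 4 → Fin 4 → ℝ) → ℝ) (hF : UniformlyElliptic 4 F)
    (h_sol : ∀ x : EuclideanSpace ℝ (Fin 4), x ≠ 0 → F (hessianMatrix 4 u x) = 0)
    (a x : EuclideanSpace ℝ (Fin 4)) (ha : ‖a‖ = 1) (hx : ‖x‖ = 1)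
    (b : Fin 3 → EuclideanSpace ℝ (Fin 4)) (hb : ∀ i, ‖b i‖ = 1)
    (h_ind : LinearIndependent ℝ b)
    (h_sup : ∀ i : Fin 3, ∀ y : EuclideanSpace ℝ (Fin 4), ‖y‖ = 1 →
      iteratedFDeriv ℝ 2 u y ![a, b i] ≤ iteratedFDeriv ℝ 2 u x ![a, b i]) :
    ∀ v w : EuclideanSpace ℝ (Fin 4), iteratedFDeriv ℝ 3 u x ![a, v, w] = 0 := by
  have hx0 : x ≠ 0 := norm_ne_zero_iff.1 (by simp [hx])
  have hM := hessianMatrix_symm (h_an x hx0).contDiffAt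
  exact cubic_term_vanishes_at_triple_supremum_general (fun y hy => (h_an y hy).contDiffAt) h_hom
    hx0 (hF.hasFDerivAt _) (fun ξ hξ => (hF.fderiv_mul_pos hM hξ).ne')
    ((isOpen_ne.eventually_mem hx0).mono h_sol) h_ind h_sup
end

section
/- Let w : ℝ⁴ ∖ {0} → ℝ be defined by w(x) = (x₁² + x₂² − x₃² − x₄²)/|x|. Then w is real analytic on ℝ⁴ ∖ {0}, positively homogeneous of order 1, at every point x ∈ ℝ⁴ ∖ {0} its Hessian D²w(x) is either zero or changes sign (is indefinite), and w is not a linear function. In particular, the analogue of Alexandrov's theorem fails in dimension 4. -/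
/-- The Lawson–Osserman type function `w(x) = (x₁² + x₂² − x₃² − x₄²)/|x|` on `ℝ⁴ ∖ {0}`. -/
noncomputable def wLO (x : EuclideanSpace ℝ (Fin 4)) : ℝ :=
  (x 0 ^ 2 + x 1 ^ 2 - x 2 ^ 2 - x 3 ^ 2) / ‖x‖

/-!
For a symmetric operator `T` consider `f x = ⟪T x, x⟫ / ‖x‖`. If the `μ`-eigenspace of `T` has
dimension at least two, it contains some `v ≠ 0` orthogonal to `x`, and then `⟪T x, v⟫ = 0` as well.
Along `x + s • v` both the form and the squared norm are affine in `s ^ 2`, so the second derivative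
of `f` at `s = 0` is twice a first derivative with respect to `s ^ 2`, namely
`D²f x (v, v) = ‖v‖ ^ 2 * (2 * μ * ‖x‖ ^ 2 - ⟪T x, x⟫) / ‖x‖ ^ 3`. For `T = diag(1, 1, -1, -1)` the
form lies between `-‖x‖ ^ 2` and `‖x‖ ^ 2`, so `μ = 1` yields a positive direction and `μ = -1` a
negative one.
-/

open Module Module.End
open scoped RealInnerProductSpace

lemma exists_ne_zero_apply_eq_zero_of_one_lt_rank {K V : Type*} [DivisionRing K] [AddCommGroup V]
    [Module K V] (hV : 1 < Module.rank K V) (φ : V →ₗ[K] K) : ∃ v ≠ 0, φ v = 0 := by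
  by_contra! hφ
  have hinj : Function.Injective φ :=
    (injective_iff_map_eq_zero φ).mpr fun v hv => by_contra fun hne => hφ v hne hv
  have hle := LinearMap.lift_rank_le_of_injective φ hinj
  simp only [rank_self, Cardinal.lift_one, Cardinal.lift_le_one_iff] at hle
  exact hle.not_gt hV

section SecondDerivative

variable {𝕜 F : Type*} [NontriviallyNormedField 𝕜] [NormedAddCommGroup F] [NormedSpace 𝕜 F]

lemma iteratedDeriv_two_comp_sq_zero {g : 𝕜 → F} (hg : ContDiffAt 𝕜 2 g 0) :
    iteratedDeriv 2 (fun s => g (s ^ 2)) 0 = (2 : 𝕜) • deriv g 0 := by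
  have h := iteratedDeriv_scomp_two (f := fun s : 𝕜 => s ^ 2) (x := 0) (by simpa using hg)
    (by fun_prop)
  simpa [Function.comp_def, iteratedDeriv_succ] using h

lemma iteratedDeriv_two_comp_line {E : Type*} [NormedAddCommGroup E] [NormedSpace 𝕜 E]
    {f : E → F} {x : E} (hf : ContDiffAt 𝕜 2 f x) (v : E) :
    iteratedDeriv 2 (fun s : 𝕜 => f (x + s • v)) 0 = iteratedFDeriv 𝕜 2 f x ![v, v] := by
  have hline : deriv (fun s : 𝕜 => x + s • v) = fun _ => v := by
    ext s
    simpa using (((hasDerivAt_id s).smul_const v).const_add x).deriv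
  have h := iteratedDeriv_vcomp_two (f := fun s : 𝕜 => x + s • v) (x := 0) (by simpa using hf)
    (by fun_prop)
  have hv : (fun _ => v) = ![v, v] := by ext i; fin_cases i <;> rfl
  simpa only [Function.comp_def, iteratedDeriv_succ, iteratedDeriv_zero, hline, deriv_const,
    map_zero, add_zero, zero_smul, hv] using h

end SecondDerivative

lemma hasDerivAt_affine_div_sqrt_affine_zero (q a m : ℝ) {c : ℝ} (hc : 0 < c) :
    HasDerivAt (fun t => (q + a * t) / √(c + m * t)) ((2 * a * c - q * m) / (2 * √c ^ 3)) 0 := by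
  have hnum : HasDerivAt (fun t => q + a * t) a 0 := by
    simpa using ((hasDerivAt_id (0 : ℝ)).const_mul a).const_add q
  have hrad : HasDerivAt (fun t => c + m * t) m 0 := by
    simpa using ((hasDerivAt_id (0 : ℝ)).const_mul m).const_add c
  have hsqrt : √c ≠ 0 := (Real.sqrt_pos.mpr hc).ne'
  have h := hnum.div (hrad.sqrt (by simpa using hc.ne')) (by simpa using hsqrt)
  refine h.congr_deriv ?_
  simp only [mul_zero, add_zero]
  field_simp
  rw [Real.sq_sqrt hc.le]
  ring

section HomogeneousRayleigh

variable {E : Type*} [NormedAddCommGroup E] [InnerProductSpace ℝ E]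

/-- The extension of the Rayleigh quotient of `T` from the unit sphere to a function that is
positively homogeneous of order 1. At the origin it takes the junk value `0`. -/
noncomputable def homogeneousRayleigh (T : E →L[ℝ] E) (x : E) : ℝ :=
  ⟪T x, x⟫ / ‖x‖

variable (T : E →L[ℝ] E)

lemma analyticAt_homogeneousRayleigh {x : E} (hx : x ≠ 0) :
    AnalyticAt ℝ (homogeneousRayleigh T) x :=
  ((T.contDiff.contDiffAt.inner ℝ contDiffAt_id).div (contDiffAt_norm ℝ hx)
    (norm_ne_zero_iff.mpr hx)).analyticAt

lemma homogeneousRayleigh_smul_of_pos {t : ℝ} (ht : 0 < t) (x : E) :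
    homogeneousRayleigh T (t • x) = t * homogeneousRayleigh T x := by
  simp only [homogeneousRayleigh, map_smul, real_inner_smul_left, real_inner_smul_right, norm_smul,
    Real.norm_of_nonneg ht.le]
  field_simp

lemma homogeneousRayleigh_neg (x : E) :
    homogeneousRayleigh T (-x) = homogeneousRayleigh T x := by
  simp [homogeneousRayleigh]

variable {T} {x v : E} {μ : ℝ}

lemma homogeneousRayleigh_of_mem_eigenspace (hv : v ∈ eigenspace (T : End ℝ E) μ) :
    homogeneousRayleigh T v = μ * ‖v‖ := by
  have hTv : T v = μ • v := mem_eigenspace_iff.mp hv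
  simp [homogeneousRayleigh, hTv, real_inner_smul_left, pow_two, mul_div_assoc]

lemma homogeneousRayleigh_add_smul (hT : (T : E →ₗ[ℝ] E).IsSymmetric) (hxv : ⟪x, v⟫ = 0)
    (hTxv : ⟪T x, v⟫ = 0) (s : ℝ) :
    homogeneousRayleigh T (x + s • v) =
      (⟪T x, x⟫ + ⟪T v, v⟫ * s ^ 2) / √(‖x‖ ^ 2 + ‖v‖ ^ 2 * s ^ 2) := by
  have hTvx : ⟪T v, x⟫ = 0 := by
    rw [real_inner_comm, ← hTxv]
    exact (hT x v).symm
  have hform : ⟪T (x + s • v), x + s • v⟫ = ⟪T x, x⟫ + ⟪T v, v⟫ * s ^ 2 := by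
    simp only [map_add, map_smul, inner_add_left, inner_add_right, real_inner_smul_left,
      real_inner_smul_right, hTxv, hTvx]
    ring
  have hnorm : ‖x + s • v‖ ^ 2 = ‖x‖ ^ 2 + ‖v‖ ^ 2 * s ^ 2 := by
    rw [norm_add_sq_real, real_inner_smul_right, hxv, norm_smul, mul_pow, Real.norm_eq_abs, sq_abs]
    ring
  rw [homogeneousRayleigh, hform, ← hnorm, Real.sqrt_sq (norm_nonneg _)]

lemma iteratedFDeriv_two_homogeneousRayleigh (hT : (T : E →ₗ[ℝ] E).IsSymmetric) (hx : x ≠ 0)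
    (hxv : ⟪x, v⟫ = 0) (hTxv : ⟪T x, v⟫ = 0) :
    iteratedFDeriv ℝ 2 (homogeneousRayleigh T) x ![v, v] =
      (2 * ⟪T v, v⟫ * ‖x‖ ^ 2 - ⟪T x, x⟫ * ‖v‖ ^ 2) / ‖x‖ ^ 3 := by
  have hx2 : 0 < ‖x‖ ^ 2 := by positivity
  have hg : ContDiffAt ℝ 2
      (fun t => (⟪T x, x⟫ + ⟪T v, v⟫ * t) / √(‖x‖ ^ 2 + ‖v‖ ^ 2 * t)) 0 := by
    refine ContDiffAt.div (by fun_prop) (ContDiffAt.sqrt (by fun_prop) ?_) ?_ <;> simpa using hx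
  rw [← iteratedDeriv_two_comp_line (analyticAt_homogeneousRayleigh T hx).contDiffAt]
  simp only [homogeneousRayleigh_add_smul hT hxv hTxv]
  rw [iteratedDeriv_two_comp_sq_zero hg,
    (hasDerivAt_affine_div_sqrt_affine_zero _ _ _ hx2).deriv, Real.sqrt_sq (norm_nonneg x),
    smul_eq_mul]
  field_simp

lemma exists_ne_zero_iteratedFDeriv_two_homogeneousRayleigh_eq
    (hT : (T : E →ₗ[ℝ] E).IsSymmetric) (hμ : 1 < Module.rank ℝ (eigenspace (T : End ℝ E) μ))
    (hx : x ≠ 0) :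
    ∃ v ≠ 0, iteratedFDeriv ℝ 2 (homogeneousRayleigh T) x ![v, v] =
      ‖v‖ ^ 2 * (2 * μ * ‖x‖ ^ 2 - ⟪T x, x⟫) / ‖x‖ ^ 3 := by
  obtain ⟨⟨v, hv⟩, hv0, hxv : ⟪x, v⟫ = 0⟩ :=
    exists_ne_zero_apply_eq_zero_of_one_lt_rank hμ (innerₛₗ ℝ x ∘ₗ Submodule.subtype _)
  have hTv : T v = μ • v := mem_eigenspace_iff.mp hv
  have hTxv : ⟪T x, v⟫ = 0 := by
    calc ⟪T x, v⟫ = ⟪x, T v⟫ := hT x v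
      _ = 0 := by rw [hTv, real_inner_smul_right, hxv, mul_zero]
  refine ⟨v, by simpa using hv0, ?_⟩
  rw [iteratedFDeriv_two_homogeneousRayleigh hT hx hxv hTxv, hTv, real_inner_smul_left,
    real_inner_self_eq_norm_sq]
  ring

lemma exists_iteratedFDeriv_two_homogeneousRayleigh_pos (hT : (T : E →ₗ[ℝ] E).IsSymmetric)
    (hμ : 1 < Module.rank ℝ (eigenspace (T : End ℝ E) μ)) (hx : x ≠ 0)
    (hlt : ⟪T x, x⟫ < 2 * μ * ‖x‖ ^ 2) :
    ∃ v, 0 < iteratedFDeriv ℝ 2 (homogeneousRayleigh T) x ![v, v] := by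
  obtain ⟨v, hv, hess⟩ := exists_ne_zero_iteratedFDeriv_two_homogeneousRayleigh_eq hT hμ hx
  have := sub_pos.mpr hlt
  exact ⟨v, by rw [hess]; positivity⟩

lemma exists_iteratedFDeriv_two_homogeneousRayleigh_neg (hT : (T : E →ₗ[ℝ] E).IsSymmetric)
    (hμ : 1 < Module.rank ℝ (eigenspace (T : End ℝ E) μ)) (hx : x ≠ 0)
    (hlt : 2 * μ * ‖x‖ ^ 2 < ⟪T x, x⟫) :
    ∃ v, iteratedFDeriv ℝ 2 (homogeneousRayleigh T) x ![v, v] < 0 := by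
  obtain ⟨v, hv, hess⟩ := exists_ne_zero_iteratedFDeriv_two_homogeneousRayleigh_eq hT hμ hx
  refine ⟨v, ?_⟩
  rw [hess]
  exact div_neg_of_neg_of_pos (mul_neg_of_pos_of_neg (by positivity) (sub_neg.mpr hlt))
    (by positivity)

lemma not_exists_linearMap_eq_homogeneousRayleigh (hμ : HasEigenvalue (T : End ℝ E) μ)
    (hμ0 : μ ≠ 0) : ¬ ∃ ℓ : E →ₗ[ℝ] ℝ, ∀ x, x ≠ 0 → homogeneousRayleigh T x = ℓ x := by
  rintro ⟨ℓ, hℓ⟩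
  obtain ⟨v, hv, hv0⟩ := hμ.exists_hasEigenvector
  have hodd : homogeneousRayleigh T v = -homogeneousRayleigh T v := by
    calc homogeneousRayleigh T v = homogeneousRayleigh T (-v) := (homogeneousRayleigh_neg T v).symm
      _ = -homogeneousRayleigh T v := by rw [hℓ _ (neg_ne_zero.mpr hv0), map_neg, hℓ v hv0]
  rw [self_eq_neg, homogeneousRayleigh_of_mem_eigenspace hv] at hodd
  exact mul_ne_zero hμ0 (norm_ne_zero_iff.mpr hv0) hodd

theorem alexandrov_fails_in_dim4_general {ν : ℝ} (hT : (T : E →ₗ[ℝ] E).IsSymmetric)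
    (hμ : 1 < Module.rank ℝ (eigenspace (T : End ℝ E) μ))
    (hν : 1 < Module.rank ℝ (eigenspace (T : End ℝ E) ν))
    (hupper : ∀ x ≠ 0, ⟪T x, x⟫ < 2 * μ * ‖x‖ ^ 2)
    (hlower : ∀ x ≠ 0, 2 * ν * ‖x‖ ^ 2 < ⟪T x, x⟫) :
    AnalyticOnNhd ℝ (homogeneousRayleigh T) {x | x ≠ 0} ∧
    (∀ t : ℝ, 0 < t → ∀ x, x ≠ 0 →
      homogeneousRayleigh T (t • x) = t * homogeneousRayleigh T x) ∧
    (∀ x, x ≠ 0 →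
      (∃ v, 0 < iteratedFDeriv ℝ 2 (homogeneousRayleigh T) x ![v, v]) ∧
      ∃ q, iteratedFDeriv ℝ 2 (homogeneousRayleigh T) x ![q, q] < 0) ∧
    ¬ ∃ ℓ : E →ₗ[ℝ] ℝ, ∀ x, x ≠ 0 → homogeneousRayleigh T x = ℓ x := by
  have hμev : HasEigenvalue (T : End ℝ E) μ :=
    hasEigenvalue_iff.mpr fun hbot => by
      rw [hbot, rank_bot] at hμ
      exact not_lt_zero hμ
  have hμ0 : μ ≠ 0 := by
    rintro rfl
    obtain ⟨v, hv, hv0⟩ := hμev.exists_hasEigenvector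
    have hTv : T v = (0 : ℝ) • v := mem_eigenspace_iff.mp hv
    simpa [hTv] using hupper v hv0
  exact ⟨fun x hx => analyticAt_homogeneousRayleigh T hx,
    fun t ht x _ => homogeneousRayleigh_smul_of_pos T ht x,
    fun x hx => ⟨exists_iteratedFDeriv_two_homogeneousRayleigh_pos hT hμ hx (hupper x hx),
      exists_iteratedFDeriv_two_homogeneousRayleigh_neg hT hν hx (hlower x hx)⟩,
    not_exists_linearMap_eq_homogeneousRayleigh hμev hμ0⟩

end HomogeneousRayleigh

section DiagonalOperator

variable {ι : Type*} [Fintype ι] [DecidableEq ι]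

/-- The operator on `EuclideanSpace ℝ ι` that multiplies the `i`-th coordinate by `d i`. -/
noncomputable def diagonalOperator (d : ι → ℝ) : EuclideanSpace ℝ ι →L[ℝ] EuclideanSpace ℝ ι :=
  Matrix.toEuclideanCLM (𝕜 := ℝ) (Matrix.diagonal d)

variable (d : ι → ℝ)

lemma diagonalOperator_apply (x : EuclideanSpace ℝ ι) (i : ι) :
    diagonalOperator d x i = d i * x i := by
  simp [diagonalOperator, Matrix.mulVec_diagonal]

lemma isSymmetric_diagonalOperator :
    (diagonalOperator d : EuclideanSpace ℝ ι →ₗ[ℝ] EuclideanSpace ℝ ι).IsSymmetric :=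
  Matrix.isSymmetric_toEuclideanLin_iff.mpr (Matrix.isHermitian_diagonal d)

lemma inner_diagonalOperator_self (x : EuclideanSpace ℝ ι) :
    ⟪diagonalOperator d x, x⟫ = ∑ i, d i * x i ^ 2 := by
  simp only [PiLp.inner_apply, diagonalOperator_apply, RCLike.inner_apply, conj_trivial]
  exact Finset.sum_congr rfl fun i _ => by ring

variable {d}

lemma inner_diagonalOperator_const_self (c : ℝ) (x : EuclideanSpace ℝ ι) :
    ⟪diagonalOperator (fun _ => c) x, x⟫ = c * ‖x‖ ^ 2 := by
  rw [inner_diagonalOperator_self, EuclideanSpace.real_norm_sq_eq, Finset.mul_sum]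

lemma inner_diagonalOperator_self_lt {e : ι → ℝ} (hde : ∀ i, d i < e i) {x : EuclideanSpace ℝ ι}
    (hx : x ≠ 0) : ⟪diagonalOperator d x, x⟫ < ⟪diagonalOperator e x, x⟫ := by
  obtain ⟨i, hi⟩ : ∃ i, x i ≠ 0 := by
    by_contra! h
    exact hx (PiLp.ext h)
  simp only [inner_diagonalOperator_self]
  refine Finset.sum_lt_sum (fun k _ => ?_) ⟨i, Finset.mem_univ i, ?_⟩
  · exact mul_le_mul_of_nonneg_right (hde k).le (sq_nonneg _)
  · exact mul_lt_mul_of_pos_right (hde i) (by positivity)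

lemma inner_diagonalOperator_self_lt_const {c : ℝ} (hd : ∀ i, d i < c) {x : EuclideanSpace ℝ ι}
    (hx : x ≠ 0) : ⟪diagonalOperator d x, x⟫ < c * ‖x‖ ^ 2 :=
  (inner_diagonalOperator_self_lt hd hx).trans_eq (inner_diagonalOperator_const_self c x)

lemma const_lt_inner_diagonalOperator_self {c : ℝ} (hd : ∀ i, c < d i) {x : EuclideanSpace ℝ ι}
    (hx : x ≠ 0) : c * ‖x‖ ^ 2 < ⟪diagonalOperator d x, x⟫ :=
  (inner_diagonalOperator_const_self c x).symm.trans_lt (inner_diagonalOperator_self_lt hd hx)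

lemma single_mem_eigenspace_diagonalOperator {i : ι} {μ : ℝ} (hi : d i = μ) :
    EuclideanSpace.single i 1 ∈
      eigenspace (diagonalOperator d : End ℝ (EuclideanSpace ℝ ι)) μ := by
  rw [mem_eigenspace_iff]
  ext j
  by_cases h : j = i <;> simp [diagonalOperator_apply, h, hi]

lemma mk_le_rank_eigenspace_diagonalOperator (μ : ℝ) :
    Cardinal.mk {i // d i = μ} ≤
      Module.rank ℝ (eigenspace (diagonalOperator d : End ℝ (EuclideanSpace ℝ ι)) μ) := by
  let e (i : {i // d i = μ}) : eigenspace (diagonalOperator d : End ℝ (EuclideanSpace ℝ ι)) μ :=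
    ⟨EuclideanSpace.single i.1 1, single_mem_eigenspace_diagonalOperator i.2⟩
  have he : LinearIndependent ℝ e := by
    refine LinearIndependent.of_comp (Submodule.subtype _) ?_
    exact EuclideanSpace.orthonormal_single.linearIndependent.comp _ Subtype.val_injective
  exact he.cardinal_le_rank

lemma one_lt_rank_eigenspace_diagonalOperator {i j : ι} {μ : ℝ} (hij : i ≠ j) (hi : d i = μ)
    (hj : d j = μ) :
    1 < Module.rank ℝ (eigenspace (diagonalOperator d : End ℝ (EuclideanSpace ℝ ι)) μ) := by
  have : Nontrivial {i // d i = μ} := ⟨⟨i, hi⟩, ⟨j, hj⟩, by simpa using hij⟩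
  exact (Cardinal.one_lt_iff_nontrivial.mpr this).trans_le
    (mk_le_rank_eigenspace_diagonalOperator μ)

end DiagonalOperator

lemma wLO_eq_homogeneousRayleigh :
    wLO = homogeneousRayleigh (diagonalOperator ![1, 1, -1, -1]) := by
  ext x
  rw [wLO, homogeneousRayleigh, inner_diagonalOperator_self, Fin.sum_univ_four]
  simp only [Matrix.cons_val_zero, Matrix.cons_val_one, Matrix.cons_val]
  ring

/-- The function `w(x) = (x₁² + x₂² − x₃² − x₄²)/|x|` is real analytic on `ℝ⁴ ∖ {0}`,
positively 1-homogeneous, its Hessian at every point of `ℝ⁴ ∖ {0}` is either zero or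
indefinite (changes sign), and yet `w` is not a linear function: the analogue of
Alexandrov's theorem fails in dimension 4. -/
theorem alexandrov_fails_in_dim4 :
    AnalyticOnNhd ℝ wLO {x | x ≠ 0} ∧
    (∀ t : ℝ, 0 < t → ∀ x : EuclideanSpace ℝ (Fin 4), x ≠ 0 →
      wLO (t • x) = t * wLO x) ∧
    (∀ x : EuclideanSpace ℝ (Fin 4), x ≠ 0 →
      (∀ v : EuclideanSpace ℝ (Fin 4), iteratedFDeriv ℝ 2 wLO x ![v, v] = 0) ∨
      ((∃ v : EuclideanSpace ℝ (Fin 4), 0 < iteratedFDeriv ℝ 2 wLO x ![v, v]) ∧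
       (∃ q : EuclideanSpace ℝ (Fin 4), iteratedFDeriv ℝ 2 wLO x ![q, q] < 0))) ∧
    ¬ ∃ ℓ : EuclideanSpace ℝ (Fin 4) →ₗ[ℝ] ℝ,
        ∀ x : EuclideanSpace ℝ (Fin 4), x ≠ 0 → wLO x = ℓ x := by
  obtain ⟨hanalytic, hhomog, hhess, hlin⟩ :=
    alexandrov_fails_in_dim4_general (μ := 1) (ν := -1)
      (isSymmetric_diagonalOperator ![1, 1, -1, -1])
      (one_lt_rank_eigenspace_diagonalOperator (i := 0) (j := 1) (by decide) rfl rfl)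
      (one_lt_rank_eigenspace_diagonalOperator (i := 2) (j := 3) (by decide) rfl rfl)
      (fun _ => inner_diagonalOperator_self_lt_const (by norm_num [Fin.forall_fin_succ]))
      (fun _ => const_lt_inner_diagonalOperator_self (by norm_num [Fin.forall_fin_succ]))
  rw [wLO_eq_homogeneousRayleigh]
  exact ⟨hanalytic, hhomog, fun x hx => .inr (hhess x hx), hlin⟩
end
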